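/- arXiv:math/9801151 — 3 statements merged into one kernel-verified Lean document; each statement's English description precedes it below -/
import Mathlib

section
/- Let 0 < n < ω and let D_0, …, D_{n−1} be Ramsey ultrafilters on ℕ which are pairwise not RK-equivalent, and let ⟨m(l) : l < ω⟩ be a strictly increasing sequence of natural numbers. Then there exist a strictly increasing sequence of indices ⟨l_j : j < ω⟩ and sets Z_i ∈ D_i (for i < n) such that: (1) l_{j+1} − l_j ≥ 2 for every j < ω; (2) Z_i ⊆ ⋃_{j ≡ i (mod n)} [m(l_j), m(l_{j+1})) for every i < n; and (3) for every i < n and every j with j ≡ i (mod n), the set Z_i ∩ [m(l_j), m(l_{j+1})) has exactly one element. -/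
/-- `D` is a Ramsey ultrafilter on ℕ: it is nonprincipal and for every partition of ℕ
(given as fibers of `f`) into sets none of which belongs to `D`, there is `A ∈ D`
meeting each piece in at most one point. -/
def IsRamseyUF (D : Ultrafilter ℕ) : Prop :=
  (∀ a : ℕ, ({a} : Set ℕ) ∉ D) ∧
    ∀ f : ℕ → ℕ, (∀ m : ℕ, f ⁻¹' {m} ∉ D) →
      ∃ A ∈ D, ∀ m : ℕ, (A ∩ f ⁻¹' {m}).Subsingleton

/-- The ultrafilters `D i` are pairwise not Rudin–Keisler-equivalent. -/
def PairwiseNotRKEquiv {n : ℕ} (D : Fin n → Ultrafilter ℕ) : Prop :=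
  ∀ i j : Fin n, i ≠ j → ∀ f : ℕ → ℕ, Ultrafilter.map f (D i) ≠ D j

open Filter Set in
theorem ram_fin (D : Ultrafilter ℕ) (h : IsRamseyUF D) {s : Set ℕ} (hs : s.Finite) : s ∉ D := by
  intro hsD
  rcases Ultrafilter.le_cofinite_or_eq_pure D with h1 | ⟨a, ha⟩
  · have : sᶜ ∈ D := h1 hs.compl_mem_cofinite
    exact (Ultrafilter.compl_notMem_iff.2 hsD) this
  · apply h.1 a
    rw [ha]; exact Ultrafilter.mem_pure.2 rfl

theorem ram_inj (D : Ultrafilter ℕ) (h : IsRamseyUF D) (g : ℕ → ℕ)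
    (hg : ∀ c, (g ⁻¹' {c}).Finite) : ∃ A ∈ D, Set.InjOn g A := by
  obtain ⟨A, hA, hs⟩ := h.2 g (fun c => ram_fin D h (hg c))
  exact ⟨A, hA, fun x hx y hy hxy => hs (g y) ⟨hx, hxy⟩ ⟨hy, rfl⟩⟩

theorem ram_sep (D E : Ultrafilter ℕ) (hE : IsRamseyUF E)
    (hne : ∀ f : ℕ → ℕ, Ultrafilter.map f D ≠ E) (u v : ℕ → ℕ)
    (hv : ∀ c, (v ⁻¹' {c}).Finite) :
    ∃ A ∈ D, ∃ B ∈ E, ∀ x ∈ A, ∀ y ∈ B, u x ≠ v y := by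
  obtain ⟨B, hB, hi⟩ := ram_inj E hE v hv
  have hd : Ultrafilter.map u D ≠ Ultrafilter.map v E := by
    intro he
    apply hne (Function.invFunOn v B ∘ u)
    rw [← Ultrafilter.map_map, he, Ultrafilter.map_map]
    apply Ultrafilter.coe_injective
    rw [Ultrafilter.coe_map]
    have : (Function.invFunOn v B ∘ v) =ᶠ[(E : Filter ℕ)] id := by
      filter_upwards [hB] with x hx
      exact hi.leftInvOn_invFunOn hx
    rw [Filter.map_congr this, Filter.map_id]
  have : ∃ C ∈ Ultrafilter.map u D, C ∉ Ultrafilter.map v E := by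
    by_contra! hc
    exact hd (Ultrafilter.coe_le_coe.1 fun s hs => hc s hs).symm
  obtain ⟨C, hC, hC'⟩ := this
  rw [← Ultrafilter.compl_mem_iff_notMem] at hC'
  refine ⟨_, hC, _, hC', fun x hx y hy h => hy ?_⟩
  have hx' : u x ∈ C := hx
  rwa [h] at hx'

theorem ram_pair {n : ℕ} (D : Fin n → Ultrafilter ℕ)
    (hRam : ∀ i : Fin n, IsRamseyUF (D i)) (hRK : PairwiseNotRKEquiv D) (g : ℕ → ℕ)
    (hg : ∀ c, (g ⁻¹' {c}).Finite) (i j : Fin n) :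
    ∃ A ∈ D i, ∃ B ∈ D j, ∀ x ∈ A, ∀ y ∈ B, (i = j → x ≠ y) → g x + 2 ≤ g y ∨ g y + 2 ≤ g x := by
  have hg1 : ∀ c, ((fun x => g x + 1) ⁻¹' {c}).Finite := fun c =>
    (hg (c - 1)).subset fun x hx => by
      simp only [Set.mem_preimage, Set.mem_singleton_iff] at *; omega
  by_cases hij : i = j
  · subst hij
    obtain ⟨A, hA, hi⟩ := ram_inj (D i) (hRam i) g hg
    have key : ∃ S ∈ D i, ∀ x ∈ S, ∀ y ∈ S, g x % 2 = g y % 2 := by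
      rcases Ultrafilter.mem_or_compl_mem (D i) {x | g x % 2 = 0} with h | h
      · exact ⟨_, h, fun x hx y hy => by simp at hx hy; omega⟩
      · exact ⟨_, h, fun x hx y hy => by simp at hx hy; omega⟩
    obtain ⟨S, hS, hp⟩ := key
    refine ⟨A ∩ S, Filter.inter_mem hA hS, A ∩ S, Filter.inter_mem hA hS, fun x hx y hy h => ?_⟩
    have h1 : g x ≠ g y := fun h' => h rfl (hi hx.1 hy.1 h')
    have := hp x hx.2 y hy.2
    omega
  · obtain ⟨A, hA, B, hB, h⟩ := ram_sep (D i) (D j) (hRam j) (hRK i j hij) g g hg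
    obtain ⟨A1, hA1, B1, hB1, h1⟩ :=
      ram_sep (D i) (D j) (hRam j) (hRK i j hij) (fun x => g x + 1) g hg
    obtain ⟨A2, hA2, B2, hB2, h2⟩ :=
      ram_sep (D i) (D j) (hRam j) (hRK i j hij) g (fun x => g x + 1) hg1
    refine ⟨A ∩ (A1 ∩ A2), Filter.inter_mem hA (Filter.inter_mem hA1 hA2),
      B ∩ (B1 ∩ B2), Filter.inter_mem hB (Filter.inter_mem hB1 hB2), fun x hx y hy _ => ?_⟩
    have a := h x hx.1 y hy.1
    have b := h1 x hx.2.1 y hy.2.1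
    have c := h2 x hx.2.2 y hy.2.2
    omega

theorem ram_all {n : ℕ} (D : Fin n → Ultrafilter ℕ)
    (hRam : ∀ i : Fin n, IsRamseyUF (D i)) (hRK : PairwiseNotRKEquiv D) (f : ℕ → ℕ)
    (hf : ∀ c, {x | f x < c}.Finite) (N : ℕ) (hN : 0 < N) :
    ∃ W : Fin n → Set ℕ, (∀ i, W i ∈ D i) ∧ (∀ i, ∀ x ∈ W i, N ≤ f x) ∧
      ∀ i j, ∀ x ∈ W i, ∀ y ∈ W j, (i = j → x ≠ y) → f x + N ≤ f y ∨ f y + N ≤ f x := by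
  have hg : ∀ c, ((fun x => f x / N) ⁻¹' {c}).Finite := fun c =>
    (hf ((c + 1) * N)).subset fun x hx => by
      simp only [Set.mem_preimage, Set.mem_singleton_iff, Set.mem_ofPred_eq] at *
      rw [← Nat.div_lt_iff_lt_mul hN]; omega
  choose A hA B hB h using ram_pair D hRam hRK (fun x => f x / N) hg
  refine ⟨fun i => {x | f x < N}ᶜ ∩ ((⋂ j, A i j) ∩ (⋂ j, B j i)), fun i => ?_, ?_, ?_⟩
  · refine Filter.inter_mem ?_ (Filter.inter_mem ?_ ?_)
    · exact Ultrafilter.compl_mem_iff_notMem.2 (ram_fin _ (hRam i) (hf N))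
    · exact Filter.iInter_mem.2 fun j => hA i j
    · exact Filter.iInter_mem.2 fun j => hB j i
  · intro i x hx
    have := hx.1
    simpa using this
  · intro i j x hx y hy hxy
    have := h i j x (Set.mem_iInter.1 hx.2.1 j) y (Set.mem_iInter.1 hy.2.2 i) hxy
    have aux : ∀ a b : ℕ, a / N + 2 ≤ b / N → a + N ≤ b := by
      intro a b hab
      have h1 : a < (a / N + 1) * N := (Nat.div_lt_iff_lt_mul hN).1 (Nat.lt_succ_self _)
      have h2 : (a / N + 2) * N ≤ b := (Nat.le_div_iff_mul_le hN).1 hab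
      nlinarith
    exact this.imp (aux _ _) (aux _ _)

/-- Lemma 1.2: given Ramsey ultrafilters `D 0, …, D (n-1)`, pairwise not RK-equivalent,
and a strictly increasing sequence `m`, there are a strictly increasing sequence of
indices `l` and sets `Z i ∈ D i` such that consecutive indices differ by at least 2,
`Z i` is contained in the union of the intervals `[m (l j), m (l (j+1)))` for
`j ≡ i (mod n)`, and `Z i` meets each such interval in exactly one point. -/
theorem stmt0 (n : ℕ) (hn : 0 < n) (D : Fin n → Ultrafilter ℕ)
    (hRam : ∀ i : Fin n, IsRamseyUF (D i)) (hRK : PairwiseNotRKEquiv D)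
    (m : ℕ → ℕ) (hm : StrictMono m) :
    ∃ l : ℕ → ℕ, StrictMono l ∧
      ∃ Z : Fin n → Set ℕ,
        (∀ i : Fin n, Z i ∈ D i) ∧
        (∀ j : ℕ, l j + 2 ≤ l (j + 1)) ∧
        (∀ i : Fin n,
          Z i ⊆ ⋃ j ∈ {j : ℕ | j % n = (i : ℕ)}, Set.Ico (m (l j)) (m (l (j + 1)))) ∧
        (∀ i : Fin n, ∀ j : ℕ, j % n = (i : ℕ) →
          ∃ a : ℕ, Z i ∩ Set.Ico (m (l j)) (m (l (j + 1))) = {a}) := by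
  classical
  set f : ℕ → ℕ := fun x => Nat.findGreatest (fun l => m l ≤ x) x with hfdef
  have hf2 : ∀ x, x < m (f x + 1) := by
    intro x
    by_contra! hc
    have h1 : f x + 1 ≤ x := (hm.id_le _).trans hc
    have : f x + 1 ≤ f x := Nat.le_findGreatest (P := fun l => m l ≤ x) h1 hc
    omega
  have hf1 : ∀ x, f x ≠ 0 → m (f x) ≤ x := fun x hx =>
    Nat.findGreatest_of_ne_zero (P := fun l => m l ≤ x) rfl hx
  have hmono : Monotone f := by
    intro x y hxy
    by_contra! hc
    have h1 := hf1 x (by omega)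
    have h2 := hf2 y
    have h3 : m (f y + 1) ≤ m (f x) := hm.monotone (by omega)
    omega
  have hffin : ∀ c, {x | f x < c}.Finite := fun c =>
    (Set.finite_lt_nat (m c)).subset fun x hx => by
      simp only [Set.mem_ofPred_eq] at *
      exact (hf2 x).trans_le (hm.monotone (by omega))
  obtain ⟨W, hWD, hWN, hWs⟩ := ram_all D hRam hRK f hffin (4 * n) (by omega)
  set U : Set ℕ := ⋃ i, W i with hU
  have hUinf : U.Infinite := by
    intro hfin
    exact ram_fin _ (hRam ⟨0, hn⟩) (hfin.subset (Set.subset_iUnion W ⟨0, hn⟩)) (hWD _)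
  set w : ℕ → ℕ := Nat.nth (· ∈ U) with hw
  have hwm : StrictMono w := Nat.nth_strictMono hUinf
  have hwU : ∀ t, w t ∈ U := fun t => Nat.nth_mem_of_infinite hUinf t
  have hlab : ∀ t, ∃ i, w t ∈ W i := fun t => Set.mem_iUnion.1 (hwU t)
  choose lab hlab using hlab
  have hlabu : ∀ t i, w t ∈ W i → lab t = i := by
    intro t i hi
    by_contra hne
    have := hWs _ _ _ (hlab t) _ hi (fun h => absurd h hne)
    omega
  have hwN : ∀ t, 4 * n ≤ f (w t) := fun t => hWN _ _ (hlab t)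
  have hws : ∀ t, f (w t) + 4 * n ≤ f (w (t + 1)) := by
    intro t
    have h1 : w t < w (t + 1) := hwm (Nat.lt_succ_self t)
    have h2 := hmono h1.le
    have := hWs _ _ _ (hlab t) _ (hlab (t + 1)) (fun _ => h1.ne)
    omega
  set l : ℕ → ℕ := fun j => f (w (j / n)) + 2 * (j % n) - 2 * (lab (j / n) : ℕ) with hl
  have hdiv : ∀ j, (j % n + 1 < n ∧ (j + 1) / n = j / n ∧ (j + 1) % n = j % n + 1) ∨
      (j % n + 1 = n ∧ (j + 1) / n = j / n + 1 ∧ (j + 1) % n = 0) := by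
    intro j
    have h0 := Nat.div_add_mod j n
    have h1 := Nat.mod_lt j hn
    rcases Nat.lt_or_ge (j % n + 1) n with h | h
    · left
      refine ⟨h, ?_⟩
      rw [Nat.div_mod_unique hn]
      exact ⟨by omega, h⟩
    · right
      refine ⟨by omega, ?_⟩
      rw [Nat.div_mod_unique hn]
      refine ⟨?_, hn⟩
      rw [Nat.mul_add]; omega
  have hl2 : ∀ j, l j + 2 ≤ l (j + 1) := by
    intro j
    have h1 := hwN (j / n)
    have h2 := hws (j / n)
    have h3 := (lab (j / n)).2
    have h4 := (lab (j / n + 1)).2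
    rcases hdiv j with ⟨a, b, c⟩ | ⟨a, b, c⟩
    · simp only [hl, b, c]; omega
    · simp only [hl, b, c]; omega
  have hlm : StrictMono l := strictMono_nat_of_lt_succ fun j => by have := hl2 j; omega
  set p : ℕ → ℕ := fun j => if (lab (j / n) : ℕ) = j % n then w (j / n) else m (l j) with hp
  have hpI : ∀ j, p j ∈ Set.Ico (m (l j)) (m (l (j + 1))) := by
    intro j
    by_cases h : (lab (j / n) : ℕ) = j % n
    · have e : l j = f (w (j / n)) := by simp only [hl, h]; omega
      have h1 := hwN (j / n)
      have h2 := hf1 (w (j / n)) (by omega)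
      have h3 := hf2 (w (j / n))
      have h4 : m (f (w (j / n)) + 1) ≤ m (l (j + 1)) := hm.monotone (by have := hl2 j; omega)
      simp only [hp, h, if_true, Set.mem_Ico]
      rw [e]
      exact ⟨h2, by omega⟩
    · simp only [hp, h, if_false, Set.mem_Ico]
      exact ⟨le_rfl, hm (hlm (Nat.lt_succ_self j))⟩
  refine ⟨l, hlm, fun i => {x | ∃ j, j % n = (i : ℕ) ∧ p j = x}, ?_, hl2, ?_, ?_⟩
  · intro i
    refine Filter.mem_of_superset (hWD i) ?_
    intro x hx
    have hxU : x ∈ U := Set.mem_iUnion.2 ⟨i, hx⟩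
    obtain ⟨t, ht⟩ : x ∈ Set.range w := by
      have e := Nat.range_nth_of_infinite (p := (· ∈ U)) hUinf
      rw [hw, e]; exact hxU
    have hli : lab t = i := hlabu t i (ht ▸ hx)
    have hd : (n * t + i) / n = t ∧ (n * t + (i : ℕ)) % n = i := by
      rw [Nat.div_mod_unique hn]
      exact ⟨by omega, i.2⟩
    refine ⟨n * t + i, hd.2, ?_⟩
    simp only [hp, hd.1, hd.2, hli, if_true, ht]
  · rintro i x ⟨j, hj, rfl⟩
    simp only [Set.mem_iUnion]
    exact ⟨j, hj, hpI j⟩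
  · intro i j hj
    refine ⟨p j, ?_⟩
    ext x
    constructor
    · rintro ⟨⟨k, hk, rfl⟩, hx⟩
      have hk' := hpI k
      have : k = j := by
        rcases lt_trichotomy k j with h | h | h
        · have : m (l (k + 1)) ≤ m (l j) := hm.monotone (hlm.monotone h)
          have a := hk'.2
          have b := hx.1
          omega
        · exact h
        · have : m (l (j + 1)) ≤ m (l k) := hm.monotone (hlm.monotone h)
          have a := hk'.1
          have b := hx.2
          omega
      rw [this]; rfl
    · rintro rfl
      exact ⟨⟨j, hj, rfl⟩, hpI j⟩
end

section
/- Let 0 < n < ω and let D_0, …, D_{n−1} be Ramsey ultrafilters on ℕ which are pairwise not RK-equivalent. Then Q(D_0,…,D_{n−1}) has the pure decision property, in the following combinatorial form: whenever I_0, I_1 ⊆ Q(D_0,…,D_{n−1}) are open sets with I_0 ∩ I_1 = ∅ and I_0 ∪ I_1 dense, then for every condition p there exist q ≤⁰ p and i ∈ {0,1} such that no extension of q belongs to I_{1−i} (equivalently, every extension of q lying in I_0 ∪ I_1 lies in I_i). -/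
/-- The position of `x` in the increasing enumeration of `A` (for `x ∈ A`):
the number of elements of `A` below `x`. -/
noncomputable def setIdx (A : Set ℕ) (x : ℕ) : ℕ := Set.ncard {y ∈ A | y < x}

/-- The `i`-th sliceMod `A_i` of `A`: if `⟨k_j⟩` is the increasing enumeration of `A`,
then `sliceMod n A i = {k_j : j ≡ i (mod n)}`. -/
def sliceMod (n : ℕ) (A : Set ℕ) (i : ℕ) : Set ℕ := {x ∈ A | setIdx A x % n = i}

/-- A condition of the forcing `Q = Qⁿ`: a pair `(w, A)` with `w ⊆ ℕ` finite and
`A ⊆ ℕ` infinite. -/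
structure QCond (n : ℕ) where
  w : Finset ℕ
  A : Set ℕ
  infinite : A.Infinite

/-- The order of `Q`: `(w, A) ≤ (v, B)` iff `w ∩ (max v + 1) = v` (i.e. `v ⊆ w` and
every element of `w \ v` exceeds every element of `v`), `w_i \ v_i ⊆ B_i` and
`A_i ⊆ B_i` for every `i < n`. -/
def QLE (n : ℕ) (p q : QCond n) : Prop :=
  q.w ⊆ p.w ∧
  (∀ x ∈ p.w, x ∉ q.w → ∀ y ∈ q.w, y < x) ∧
  (∀ i < n, sliceMod n (↑p.w) i \ sliceMod n (↑q.w) i ⊆ sliceMod n q.A i) ∧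
  (∀ i < n, sliceMod n p.A i ⊆ sliceMod n q.A i)

/-- `p` is a pure extension of `q` : `p ≤ q` and `wᵖ = w^q`. -/
def QPure (n : ℕ) (p q : QCond n) : Prop := QLE n p q ∧ p.w = q.w

/-- Membership in the suborder `Q(D 0, …, D (n-1))`: `A_i ∈ D i` for every `i < n`. -/
def InQD {n : ℕ} (D : Fin n → Ultrafilter ℕ) (p : QCond n) : Prop :=
  ∀ i : Fin n, sliceMod n p.A (i : ℕ) ∈ D i

/-- `p` and `q` are compatible in `Q`. -/
def QCompat (n : ℕ) (p q : QCond n) : Prop := ∃ r : QCond n, QLE n r p ∧ QLE n r q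

theorem ruf_fin {D : Ultrafilter ℕ} (h : IsRamseyUF D) {s : Set ℕ} (hs : s.Finite) : s ∉ D := by
  intro hm
  obtain ⟨x, _, hx⟩ := Ultrafilter.eq_pure_of_finite_mem hs hm
  exact h.1 x (by rw [hx]; simp)

theorem ruf_cofin {D : Ultrafilter ℕ} (h : IsRamseyUF D) {s : Set ℕ} (hs : sᶜ.Finite) : s ∈ D := by
  by_contra hc
  exact ruf_fin h hs (Ultrafilter.compl_mem_iff_notMem.2 hc)

theorem ruf_inf {D : Ultrafilter ℕ} (h : IsRamseyUF D) {s : Set ℕ} (hs : s ∈ D) : s.Infinite :=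
  fun hf => ruf_fin h hf hs

theorem ruf_ge {D : Ultrafilter ℕ} (h : IsRamseyUF D) (N : ℕ) : {x | N ≤ x} ∈ D := by
  apply ruf_cofin h
  apply (Set.finite_Iio N).subset
  intro x hx
  simpa using hx

theorem ruf_inj {D : Ultrafilter ℕ} (h : IsRamseyUF D) (b : ℕ → ℕ) (hb : ∀ m, b ⁻¹' {m} ∉ D) :
    ∃ A ∈ D, Set.InjOn b A := by
  obtain ⟨A, hA, h2⟩ := h.2 b hb
  exact ⟨A, hA, fun x hx y hy hxy => h2 (b y) ⟨hx, hxy⟩ ⟨hy, rfl⟩⟩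

theorem ruf_ppoint {D : Ultrafilter ℕ} (h : IsRamseyUF D) (X : ℕ → Set ℕ) (hX : ∀ m, X m ∈ D) :
    ∃ A ∈ D, ∀ m, ∃ N, ∀ y ∈ A, N ≤ y → y ∈ X m := by
  classical
  have ex : ∀ y : ℕ, ∃ m, y ∉ X m ∩ {z | m + 1 ≤ z} := fun y => ⟨y, fun hh => by
    have := hh.2; simp at this⟩
  obtain ⟨A, hA, hinj⟩ := ruf_inj h (fun y => Nat.find (ex y)) (by
    intro m hm
    have h1 : X m ∩ {z | m + 1 ≤ z} ∈ D := Filter.inter_mem (hX m) (ruf_ge h _)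
    have h2 := Filter.inter_mem hm h1
    obtain ⟨y, hy1, hy2⟩ := Ultrafilter.nonempty_of_mem h2
    have h3 := Nat.find_spec (ex y)
    have h4 : Nat.find (ex y) = m := hy1
    rw [h4] at h3
    exact h3 hy2)
  refine ⟨A, hA, fun m => ?_⟩
  have hf : {y ∈ A | y ∉ X m}.Finite := by
    apply Set.Finite.of_finite_image (f := fun y => Nat.find (ex y))
    · apply (Set.finite_Iic m).subset
      rintro _ ⟨y, hy, rfl⟩
      exact Nat.find_min' (ex y) (fun hh => hy.2 hh.1)
    · exact hinj.mono (fun y hy => hy.1)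
  obtain ⟨N, hN⟩ := hf.bddAbove
  refine ⟨N + 1, fun y hy hNy => ?_⟩
  by_contra hc
  have := hN ⟨hy, hc⟩
  omega

theorem rk_sep {D E : Ultrafilter ℕ} (hE : IsRamseyUF E) (hRK : ∀ f : ℕ → ℕ, Ultrafilter.map f D ≠ E)
    (φ ψ : ℕ → ℕ) (hψ : ∀ m, ψ ⁻¹' {m} ∉ E) :
    ∃ S ∈ D, ∃ T ∈ E, ∀ x ∈ S, ∀ y ∈ T, φ x ≠ ψ y := by
  obtain ⟨A, hA, hinj⟩ := ruf_inj hE ψ hψ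
  have hne : Ultrafilter.map φ D ≠ Ultrafilter.map ψ E := by
    intro heq
    apply hRK (Function.invFunOn ψ A ∘ φ)
    rw [← Ultrafilter.map_map, heq, Ultrafilter.map_map]
    apply Ultrafilter.coe_injective
    rw [Ultrafilter.coe_map]
    have : (Function.invFunOn ψ A ∘ ψ) =ᶠ[(E : Filter ℕ)] id := by
      filter_upwards [hA] with x hx
      exact hinj.leftInvOn_invFunOn hx
    rw [Filter.map_congr this, Filter.map_id]
  obtain ⟨s, hs1, hs2⟩ : ∃ s, s ∈ Ultrafilter.map φ D ∧ s ∉ Ultrafilter.map ψ E := by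
    by_contra hc
    push Not at hc
    apply hne
    symm
    apply Ultrafilter.coe_injective
    exact Ultrafilter.coe_le_coe.1 (fun s hs => hc s hs) ▸ rfl
  rw [← Ultrafilter.compl_mem_iff_notMem] at hs2
  refine ⟨φ ⁻¹' s, hs1, ψ ⁻¹' sᶜ, hs2, fun x hx y hy hxy => hy ?_⟩
  rw [← hxy]; exact hx

theorem spacing {n : ℕ} (D : Fin n → Ultrafilter ℕ)
    (hRam : ∀ i : Fin n, IsRamseyUF (D i)) (hRK : PairwiseNotRKEquiv D) (b : ℕ → ℕ)
    (hb : ∀ m, (b ⁻¹' {m}).Finite) :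
    ∃ E : Fin n → Set ℕ, (∀ i, E i ∈ D i) ∧ ∀ i j, ∀ x ∈ E i, ∀ y ∈ E j,
      b x < b y + 3 → b y < b x + 3 → i = j ∧ x = y := by
  have h1 : ∀ i, ∃ A ∈ D i, Set.InjOn b A := fun i =>
    ruf_inj (hRam i) b (fun m => ruf_fin (hRam i) (hb m))
  choose A hA hinj using h1
  have h2 : ∀ i, ∃ A ∈ D i, ∀ x ∈ A, ∀ y ∈ A, b x % 3 = b y % 3 := by
    intro i
    have hu : ({x | b x % 3 = 0} ∪ {x | b x % 3 = 1} ∪ {x | b x % 3 = 2} : Set ℕ) ∈ D i := by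
      apply Filter.mem_of_superset Filter.univ_mem
      intro x _
      simp only [Set.mem_union, Set.mem_ofPred_eq]
      omega
    rcases Ultrafilter.union_mem_iff.1 hu with hu | hu
    · rcases Ultrafilter.union_mem_iff.1 hu with hu | hu
      · exact ⟨_, hu, fun x hx y hy => hx.trans hy.symm⟩
      · exact ⟨_, hu, fun x hx y hy => hx.trans hy.symm⟩
    · exact ⟨_, hu, fun x hx y hy => hx.trans hy.symm⟩
  choose B hB hB3 using h2
  have h3 : ∀ i j : Fin n, ∀ d d' : Fin 3, ∃ S ∈ D i, ∃ T ∈ D j, i ≠ j →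
      ∀ x ∈ S, ∀ y ∈ T, b x + d ≠ b y + d' := by
    intro i j d d'
    by_cases hij : i = j
    · exact ⟨Set.univ, Filter.univ_mem, Set.univ, Filter.univ_mem, fun h => absurd hij h⟩
    · obtain ⟨S, hS, T, hT, h⟩ := rk_sep (hRam j) (hRK i j hij) (fun x => b x + d)
        (fun x => b x + d') (fun m => ruf_fin (hRam j) ((hb (m - d')).subset (by
          intro x hx
          simp at hx ⊢
          omega)))
      exact ⟨S, hS, T, hT, fun _ => h⟩
  choose S hS T hT hST using h3
  refine ⟨fun i => A i ∩ B i ∩ (⋂ j, ⋂ d, ⋂ d', S i j d d') ∩ (⋂ j, ⋂ d, ⋂ d', T j i d d'), ?_, ?_⟩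
  · intro i
    refine Filter.inter_mem (Filter.inter_mem (Filter.inter_mem (hA i) (hB i)) ?_) ?_
    · exact Filter.iInter_mem.2 fun j => Filter.iInter_mem.2 fun d => Filter.iInter_mem.2 fun d' =>
        hS i j d d'
    · exact Filter.iInter_mem.2 fun j => Filter.iInter_mem.2 fun d => Filter.iInter_mem.2 fun d' =>
        hT j i d d'
  · rintro i j x ⟨⟨⟨hxA, hxB⟩, hxS⟩, hxT⟩ y ⟨⟨⟨hyA, hyB⟩, hyS⟩, hyT⟩ h1 h2
    by_cases hij : i = j
    · subst hij
      refine ⟨rfl, hinj i hxA hyA ?_⟩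
      have := hB3 i x hxB y hyB
      omega
    · exfalso
      simp only [Set.mem_iInter] at hxS hyT
      rcases le_total (b x) (b y) with hle | hle
      · exact hST i j ⟨b y - b x, by omega⟩ ⟨0, by omega⟩ hij x (hxS _ _ _) y (hyT _ _ _)
          (by simp; omega)
      · exact hST i j ⟨0, by omega⟩ ⟨b x - b y, by omega⟩ hij x (hxS _ _ _) y (hyT _ _ _)
          (by simp; omega)

/-- enumerated interleaving -/
theorem slice_range {n : ℕ} (c : ℕ → ℕ) (hc : StrictMono c) (i : ℕ) :
    sliceMod n (Set.range c) i = {x | ∃ m, m % n = i ∧ c m = x} := by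
  have key : ∀ m, setIdx (Set.range c) (c m) = m := by
    intro m
    unfold setIdx
    have : {y ∈ Set.range c | y < c m} = c '' (Set.Iio m) := by
      ext y
      constructor
      · rintro ⟨⟨k, rfl⟩, hk⟩
        exact ⟨k, hc.lt_iff_lt.1 hk, rfl⟩
      · rintro ⟨k, hk, rfl⟩
        exact ⟨⟨k, rfl⟩, hc hk⟩
    rw [this, Set.ncard_image_of_injective _ hc.injective, ← Finset.coe_Iio, Set.ncard_coe_finset]
    simp
  ext x
  constructor
  · rintro ⟨⟨m, rfl⟩, hm⟩
    rw [key] at hm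
    exact ⟨m, hm, rfl⟩
  · rintro ⟨m, hm, rfl⟩
    exact ⟨⟨m, rfl⟩, by rw [key]; exact hm⟩

theorem nat_least {P : ℕ → Prop} (h : ∃ k, P k) : ∃ k, P k ∧ ∀ j < k, ¬ P j := by
  classical
  exact ⟨Nat.find h, Nat.find_spec h, fun j hj => Nat.find_min h hj⟩

theorem enum_set {K : Set ℕ} (hK : K.Infinite) :
    ∃ κ : ℕ → ℕ, StrictMono κ ∧ (∀ q, κ q ∈ K) ∧ ∀ k ∈ K, ∃ q, κ q = k := by
  have h2 : Set.range (Nat.nth (· ∈ K)) = K := Nat.range_nth_of_infinite hK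
  refine ⟨Nat.nth (· ∈ K), Nat.nth_strictMono hK, fun q => Nat.nth_mem_of_infinite hK q, ?_⟩
  intro k hk
  rw [← h2] at hk
  exact hk

theorem diag {n : ℕ} (hn : 0 < n) (D : Fin n → Ultrafilter ℕ)
    (hRam : ∀ i : Fin n, IsRamseyUF (D i)) (hRK : PairwiseNotRKEquiv D)
    (Y : ℕ → Set ℕ) (hY : ∀ i : Fin n, Y i ∈ D i)
    (X : ℕ → ℕ → Set ℕ) (hX : ∀ m, ∀ i : Fin n, X m i ∈ D i) :
    ∃ C : Set ℕ, C.Infinite ∧ (∀ i : Fin n, sliceMod n C i ∈ D i) ∧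
      (∀ i < n, sliceMod n C i ⊆ Y i) ∧
      ∀ x ∈ C, ∀ i < n, ∀ y ∈ sliceMod n C i, x < y → y ∈ X x i := by
  have h1 : ∀ i : Fin n, ∃ A ∈ D i, ∀ m, ∃ N, ∀ y ∈ A, N ≤ y → y ∈ X m i := fun i =>
    ruf_ppoint (hRam i) (fun m => X m i) (fun m => hX m i)
  choose A hA N hN using h1
  set F : Fin n → Set ℕ := fun i => A i ∩ Y i with hF
  have hFD : ∀ i, F i ∈ D i := fun i => Filter.inter_mem (hA i) (hY i)
  obtain ⟨g, hgmono, hgid, hg⟩ : ∃ g : ℕ → ℕ, Monotone g ∧ (∀ m, m < g m) ∧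
      ∀ i m, N i m ≤ g m := by
    refine ⟨fun m => m + 1 + ∑ k ∈ Finset.range (m + 1), ∑ i, N i k, ?_, ?_, ?_⟩
    · intro a b hab
      have : ∑ k ∈ Finset.range (a + 1), ∑ i, N i k ≤ ∑ k ∈ Finset.range (b + 1), ∑ i, N i k :=
        Finset.sum_le_sum_of_subset (Finset.range_mono (by omega))
      simp only
      omega
    · intro m
      simp only
      omega
    · intro i m
      have h1 : N i m ≤ ∑ i, N i m :=
        Finset.single_le_sum (f := fun i => N i m) (fun _ _ => Nat.zero_le _) (Finset.mem_univ i)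
      have h2 : ∑ i, N i m ≤ ∑ k ∈ Finset.range (m + 1), ∑ i, N i k :=
        Finset.single_le_sum (f := fun k => ∑ i, N i k) (fun _ _ => Nat.zero_le _)
          (Finset.mem_range.2 (Nat.lt_succ_self m))
      simp only
      omega
  -- fillers
  have hnext : ∀ (i : Fin n) (z : ℕ), ∃ y ∈ F i, z < y := fun i z =>
    (ruf_inf (hRam i) (hFD i)).exists_gt z
  choose nx hnxF hnxgt using hnext
  let f : ℕ → ℕ := fun m => Nat.rec (motive := fun _ => ℕ) (nx ⟨0, hn⟩ 0)
    (fun k v => nx ⟨(k + 1) % n, Nat.mod_lt _ hn⟩ (g v)) m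
  have hf1 : ∀ m, g (f m) ≤ f (m + 1) := fun m => (hnxgt _ _).le
  have hfF : ∀ m, f m ∈ F ⟨m % n, Nat.mod_lt _ hn⟩ := by
    intro m
    cases m with
    | zero =>
      have := hnxF ⟨0, hn⟩ 0
      simpa [f] using this
    | succ k => exact hnxF _ _
  have hfmono : StrictMono f := strictMono_nat_of_lt_succ fun m => (hgid _).trans_le (hf1 m)
  have hfg : ∀ a c, a < c → g (f a) ≤ f c := fun a c h => (hf1 a).trans (hfmono.monotone h)
  have ex : ∀ e : ℕ, ∃ k, e < f (n * k) := fun e => ⟨e + 1, by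
    have h1 := hfmono.le_apply (x := n * (e + 1))
    have h2 : e + 1 ≤ n * (e + 1) := Nat.le_mul_of_pos_left _ hn
    omega⟩
  classical
  have exb : ∀ e : ℕ, ∃ k, e < f (n * k) ∧ ∀ j < k, ¬ e < f (n * j) := fun e => nat_least (ex e)
  choose b hb1 hb2' using exb
  have hb2 : ∀ e k, k < b e → f (n * k) ≤ e := fun e k hk => not_lt.1 (hb2' e k hk)
  have hbfin : ∀ m, (b ⁻¹' {m}).Finite := by
    intro m
    apply (Set.finite_Iio (f (n * m))).subset
    intro e he
    have he' : b e = m := he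
    rw [← he']; exact hb1 e
  obtain ⟨E0, hE0, hsp⟩ := spacing D hRam hRK b hbfin
  let E : Fin n → Set ℕ := fun i => (E0 i ∩ F i) ∩ {x | f (n * 1) ≤ x}
  have hED : ∀ i, E i ∈ D i := fun i =>
    Filter.inter_mem (Filter.inter_mem (hE0 i) (hFD i)) (ruf_ge (hRam i) _)
  have hEb : ∀ i, ∀ e ∈ E i, 2 ≤ b e := by
    intro i e he
    by_contra hc
    have h3 := hb1 e
    have h4 : f (n * b e) ≤ f (n * 1) := hfmono.monotone (Nat.mul_le_mul_left _ (by omega))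
    have := he.2
    simp only [Set.mem_ofPred_eq] at this
    omega
  -- set of block indices
  let K : Set ℕ := {k | ∃ i, ∃ e ∈ E i, b e = k}
  have hKinf : K.Infinite := by
    have h3 := ruf_inf (hRam ⟨0, hn⟩) (hED ⟨0, hn⟩)
    have h4 : (b '' E ⟨0, hn⟩).Infinite := by
      apply h3.image
      intro x hx y hy hxy
      exact (hsp _ _ x hx.1.1 y hy.1.1 (by omega) (by omega)).2
    apply h4.mono
    rintro _ ⟨e, he, rfl⟩
    exact ⟨_, e, he, rfl⟩
  obtain ⟨κ, hκm, hκK, hκs⟩ := enum_set hKinf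
  choose ty el hel hbel using hκK
  have hκ3 : ∀ q q', q < q' → κ q + 3 ≤ κ q' := by
    intro q q' hq
    have h3 := hκm hq
    by_contra hc
    have := hsp _ _ _ (hel q).1.1 _ (hel q').1.1 (by rw [hbel, hbel]; omega)
      (by rw [hbel, hbel]; omega)
    have h5 : b (el q) = b (el q') := by rw [this.2]
    rw [hbel, hbel] at h5
    omega
  have hκ2 : ∀ q, 2 ≤ κ q := fun q => by rw [← hbel q]; exact hEb _ _ (hel q)
  have hel1 : ∀ q, el q < f (n * κ q) := fun q => by
    have := hb1 (el q); rwa [hbel] at this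
  have hel2 : ∀ q, f (n * (κ q - 1)) ≤ el q := fun q => hb2 _ _ (by
    have := hκ2 q; rw [hbel]; omega)
  -- cycles
  let u : ℕ → ℕ → ℕ := fun q r =>
    if r < ty q then f (n * (κ q - 2) + r) else if r = ty q then el q else f (n * κ q + r)
  have hmul : ∀ q, n * (κ q - 1) = n * (κ q - 2) + n ∧ n * κ q = n * (κ q - 2) + n + n := by
    intro q
    obtain ⟨k, hk⟩ : ∃ k, κ q = k + 2 := ⟨κ q - 2, by have := hκ2 q; omega⟩
    rw [hk]
    constructor
    · have : k + 2 - 1 = k + 1 := by omega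
      rw [this, Nat.add_sub_cancel]; ring
    · rw [Nat.add_sub_cancel]; ring
  have hgel : ∀ q m, n * κ q < m → g (el q) ≤ f m := fun q m hm =>
    (hgmono (hel1 q).le).trans (hfg _ _ hm)
  have hugg : ∀ q r s, r < s → s < n → g (u q r) ≤ u q s := by
    intro q r s hrs hsn
    have := hmul q
    have h2 := hel2 q
    simp only [u]
    split_ifs with a1 a2 a3 a4 a5 a6 a7 <;> try omega
    · exact hfg _ _ (by omega)
    · exact (hfg _ _ (by omega)).trans h2
    · exact hfg _ _ (by omega)
    · exact hgel _ _ (by omega)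
    · exact hfg _ _ (by omega)
  have hulow : ∀ q r, f (n * (κ q - 2)) ≤ u q r := by
    intro q r
    have := hmul q
    have h2 := hel2 q
    simp only [u]
    split_ifs
    · exact hfmono.monotone (by omega)
    · exact le_trans (hfmono.monotone (by omega)) h2
    · exact hfmono.monotone (by omega)
  have huhigh : ∀ q r, r < n → g (u q r) ≤ f (n * (κ q + 1)) := by
    intro q r hr
    have := hmul q
    have h3 : n * (κ q + 1) = n * κ q + n := by ring
    rw [h3]
    simp only [u]
    split_ifs
    · exact hfg _ _ (by omega)
    · exact hgel _ _ (by omega)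
    · exact hfg _ _ (by omega)
  have huF : ∀ q r (hr : r < n), u q r ∈ F ⟨r, hr⟩ := by
    intro q r hr
    have aux : ∀ k, f (n * k + r) ∈ F ⟨r, hr⟩ := by
      intro k
      have h3 := hfF (n * k + r)
      have h4 : (n * k + r) % n = r := by rw [Nat.mul_add_mod, Nat.mod_eq_of_lt hr]
      simpa only [h4] using h3
    simp only [u]
    split_ifs with a1 a2
    · exact aux _
    · have h3 := (hel q).1.2
      have : (⟨r, hr⟩ : Fin n) = ty q := Fin.ext a2
      rw [this]; exact h3
    · exact aux _
  let c : ℕ → ℕ := fun m => u (m / n) (m % n)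
  have hcg : ∀ a d, a < d → g (c a) ≤ c d := by
    intro a d had
    rcases (Nat.div_le_div_right (c := n) had.le).lt_or_eq with hlt | heq
    · have h3 := hκ3 _ _ hlt
      refine (huhigh _ _ (Nat.mod_lt _ hn)).trans (le_trans ?_ (hulow _ _))
      exact hfmono.monotone (Nat.mul_le_mul_left _ (by omega))
    · have h3 := Nat.div_add_mod a n
      have h4 := Nat.div_add_mod d n
      simp only [c]
      rw [heq] at h3 ⊢
      exact hugg _ _ _ (by omega) (Nat.mod_lt _ hn)
  have hcm : StrictMono c := fun a d h => (hgid _).trans_le (hcg a d h)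
  have hcF : ∀ i (hi : i < n) m, m % n = i → c m ∈ F ⟨i, hi⟩ := by
    rintro i hi m rfl
    exact huF _ _ _
  refine ⟨Set.range c, Set.infinite_range_of_injective hcm.injective, ?_, ?_, ?_⟩
  · intro i
    apply Filter.mem_of_superset (hED i)
    intro e he
    rw [slice_range c hcm]
    obtain ⟨q, hq⟩ := hκs (b e) ⟨i, e, he, rfl⟩
    have h3 := hsp _ _ e he.1.1 _ (hel q).1.1 (by rw [hbel, hq]; omega) (by rw [hbel, hq]; omega)
    refine ⟨n * q + i, ?_, ?_⟩
    · rw [Nat.mul_add_mod, Nat.mod_eq_of_lt i.2]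
    · simp only [c]
      rw [Nat.mul_add_mod, Nat.mod_eq_of_lt i.2, Nat.mul_add_div hn, Nat.div_eq_of_lt i.2]
      simp [u, h3.1, h3.2]
  · intro i hi x hx
    rw [slice_range c hcm] at hx
    obtain ⟨m, hm, rfl⟩ := hx
    exact (hcF i hi m hm).2
  · rintro _ ⟨a, rfl⟩ i hi y hy hlt
    rw [slice_range c hcm] at hy
    obtain ⟨m, hm, rfl⟩ := hy
    exact hN ⟨i, hi⟩ (c a) _ (hcF i hi m hm).1 ((hg _ _).trans (hcg _ _ (hcm.lt_iff_lt.1 hlt)))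

theorem setIdx_eq {s t : Finset ℕ} (hst : s ⊆ t) (hend : ∀ x ∈ t, x ∉ s → ∀ y ∈ s, y < x)
    {x : ℕ} (hx : x ∈ s) : setIdx (↑s) x = setIdx (↑t) x := by
  unfold setIdx
  congr 1
  ext y
  simp only [Finset.mem_coe, Set.mem_ofPred_eq]
  constructor
  · rintro ⟨h1, h2⟩
    exact ⟨hst h1, h2⟩
  · rintro ⟨h1, h2⟩
    refine ⟨?_, h2⟩
    by_contra hc
    have := hend y h1 hc x hx
    omega

theorem setIdx_card {s t : Finset ℕ} {x : ℕ} (h : ∀ y, y ∈ s ↔ y ∈ t ∧ y < x) :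
    setIdx (↑t) x = s.card := by
  unfold setIdx
  rw [← Set.ncard_coe_finset]
  congr 1
  ext y
  simp [h]

/-- `t` extends `s` using the set `C`. -/
def WExt (n : ℕ) (t s : Finset ℕ) (C : Set ℕ) : Prop :=
  s ⊆ t ∧ (∀ x ∈ t, x ∉ s → ∀ y ∈ s, y < x) ∧
    ∀ x ∈ t, x ∉ s → x ∈ sliceMod n C (setIdx (↑t) x % n)

theorem QLE_iff {n : ℕ} (hn : 0 < n) (p q : QCond n) :
    QLE n p q ↔ WExt n p.w q.w q.A ∧ ∀ i < n, sliceMod n p.A i ⊆ sliceMod n q.A i := by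
  constructor
  · rintro ⟨h1, h2, h3, h4⟩
    refine ⟨⟨h1, h2, fun x hx hxq => ?_⟩, h4⟩
    exact h3 _ (Nat.mod_lt _ hn) ⟨⟨hx, rfl⟩, fun hh => hxq hh.1⟩
  · rintro ⟨⟨h1, h2, h3⟩, h4⟩
    refine ⟨h1, h2, fun i hi x hx => ?_, h4⟩
    obtain ⟨⟨hxp, hxi⟩, hxn⟩ := hx
    have hxq : x ∉ q.w := fun hh => hxn ⟨hh, by rw [setIdx_eq h1 h2 hh]; exact hxi⟩
    have := h3 x hxp hxq
    rwa [hxi] at this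

theorem WExt.refl {n : ℕ} (s : Finset ℕ) (C : Set ℕ) : WExt n s s C :=
  ⟨subset_rfl, fun _ h h' => absurd h h', fun _ h h' => absurd h h'⟩

theorem WExt.mono {n : ℕ} (hn : 0 < n) {t s : Finset ℕ} {C C' : Set ℕ} (h : WExt n t s C)
    (hC : ∀ i < n, sliceMod n C i ⊆ sliceMod n C' i) : WExt n t s C' :=
  ⟨h.1, h.2.1, fun x hx hxs => hC _ (Nat.mod_lt _ hn) (h.2.2 x hx hxs)⟩

def GoodW {n : ℕ} (D : Fin n → Ultrafilter ℕ) (I : Set (QCond n)) (s : Finset ℕ) : Prop :=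
  ∃ q : QCond n, InQD D q ∧ q.w = s ∧ ∀ r, InQD D r → QLE n r q → r ∉ I

theorem good_step {n : ℕ} (hn : 0 < n) (D : Fin n → Ultrafilter ℕ)
    (hRam : ∀ i : Fin n, IsRamseyUF (D i)) (hRK : PairwiseNotRKEquiv D)
    (I : Set (QCond n))
    (hopen : ∀ p q : QCond n, InQD D p → InQD D q → QLE n p q → q ∈ I → p ∈ I)
    (s : Finset ℕ)
    (hs : {x | GoodW D I (insert x s)} ∈ D ⟨s.card % n, Nat.mod_lt _ hn⟩) : GoodW D I s := by
  classical
  set j : Fin n := ⟨s.card % n, Nat.mod_lt _ hn⟩ with hj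
  have hB : ∀ x, ∃ B : Set ℕ, GoodW D I (insert x s) → ∃ hB : B.Infinite,
      InQD D ⟨insert x s, B, hB⟩ ∧
      ∀ r, InQD D r → QLE n r ⟨insert x s, B, hB⟩ → r ∉ I := by
    intro x
    by_cases h : GoodW D I (insert x s)
    · obtain ⟨⟨w, B, hB⟩, h1, h2, h3⟩ := h
      simp only at h2
      subst h2
      exact ⟨B, fun _ => ⟨hB, h1, h3⟩⟩
    · exact ⟨∅, fun hh => absurd hh h⟩
  choose B hB using hB
  obtain ⟨C, hCinf, hCD, hCY, hCX⟩ := diag hn D hRam hRK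
    (fun i => {x | i = s.card % n → GoodW D I (insert x s)})
    (by
      intro i
      by_cases hi : i = j
      · subst hi
        exact Filter.mem_of_superset hs (fun x hx _ => hx)
      · apply Filter.mem_of_superset Filter.univ_mem
        intro x _ h
        exact absurd (Fin.ext h) hi)
    (fun m i => {y | GoodW D I (insert m s) → y ∈ sliceMod n (B m) i})
    (by
      intro m i
      by_cases h : GoodW D I (insert m s)
      · obtain ⟨_, h1, _⟩ := hB m h
        exact Filter.mem_of_superset (h1 i) (fun x hx _ => hx)
      · exact Filter.mem_of_superset Filter.univ_mem (fun x _ hh => absurd hh h))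
  refine ⟨⟨s, C, hCinf⟩, hCD, rfl, ?_⟩
  -- main claim for proper extensions
  have main : ∀ r, InQD D r → QLE n r ⟨s, C, hCinf⟩ → r.w ≠ s → r ∉ I := by
    intro r hr hrq hne hrI
    rw [QLE_iff hn] at hrq
    obtain ⟨⟨h1, h2, h3⟩, h4⟩ := hrq
    simp only at h1 h2 h3 h4
    have hnonempty : (r.w \ s).Nonempty := by
      rw [Finset.sdiff_nonempty]
      exact fun h => hne (h.antisymm h1)
    set x := (r.w \ s).min' hnonempty with hxdef
    have hxm : x ∈ r.w \ s := Finset.min'_mem _ _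
    obtain ⟨hxr, hxs⟩ := Finset.mem_sdiff.1 hxm
    have hmin : ∀ y ∈ r.w, y ∉ s → x ≤ y := fun y hy hys =>
      Finset.min'_le _ _ (Finset.mem_sdiff.2 ⟨hy, hys⟩)
    have hidx : setIdx (↑r.w) x = s.card := setIdx_card (by
      intro y
      constructor
      · intro hy
        exact ⟨h1 hy, h2 x hxr hxs y hy⟩
      · rintro ⟨hy, hyx⟩
        by_contra hc
        have := hmin y hy hc
        omega)
    have hxC := h3 x hxr hxs
    rw [hidx] at hxC
    have hgood : GoodW D I (insert x s) := hCY _ (Nat.mod_lt _ hn) hxC rfl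
    obtain ⟨hBi, hBD, hBr⟩ := hB x hgood
    obtain ⟨E, hEinf, hED, hEY, -⟩ := diag hn D hRam hRK
      (fun i => sliceMod n r.A i ∩ sliceMod n (B x) i)
      (fun i => Filter.inter_mem (hr i) (hBD i)) (fun _ _ => Set.univ)
      (fun _ _ => Filter.univ_mem)
    have hE1 : QLE n ⟨r.w, E, hEinf⟩ r := by
      rw [QLE_iff hn]
      exact ⟨WExt.refl _ _, fun i hi => (hEY i hi).trans Set.inter_subset_left⟩
    have hE2 : QLE n ⟨r.w, E, hEinf⟩ ⟨insert x s, B x, hBi⟩ := by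
      rw [QLE_iff hn]
      refine ⟨⟨?_, ?_, ?_⟩, fun i hi => (hEY i hi).trans Set.inter_subset_right⟩
      · exact Finset.insert_subset hxr h1
      · intro y hy hyn z hz
        simp only [Finset.mem_insert, not_or] at hyn hz
        rcases hz with rfl | hz
        · exact lt_of_le_of_ne (hmin y hy hyn.2) (Ne.symm hyn.1)
        · exact h2 y hy hyn.2 z hz
      · intro y hy hyn
        simp only [Finset.mem_insert, not_or] at hyn
        exact hCX x hxC.1 _ (Nat.mod_lt _ hn) y (h3 y hy hyn.2)
          (lt_of_le_of_ne (hmin y hy hyn.2) (Ne.symm hyn.1)) hgood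
    have hED' : InQD D ⟨r.w, E, hEinf⟩ := hED
    exact hBr _ hED' hE2 (hopen _ _ hED' hr hE1 hrI)
  intro r hr hrq hrI
  by_cases hne : r.w = s
  · -- extend by one point
    obtain ⟨x, hxE, hxgt⟩ := (ruf_inf (hRam j) (hr j)).exists_gt (s.sup id)
    have hgt : ∀ y ∈ s, y < x := fun y hy =>
      lt_of_le_of_lt (Finset.le_sup (f := id) hy) hxgt
    have hxs : x ∉ s := fun h => lt_irrefl _ (hgt x h)
    have hidx : setIdx (↑(insert x s)) x = s.card := setIdx_card (by
      intro y
      simp only [Finset.mem_insert]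
      constructor
      · intro hy
        exact ⟨Or.inr hy, hgt y hy⟩
      · rintro ⟨rfl | hy, h⟩
        · exact absurd h (lt_irrefl _)
        · exact hy)
    rw [QLE_iff hn] at hrq
    have hW : WExt n (insert x s) s r.A := by
      refine ⟨Finset.subset_insert _ _, ?_, ?_⟩
      · intro y hy hys z hz
        rcases Finset.mem_insert.1 hy with rfl | hy
        · exact hgt z hz
        · exact absurd hy hys
      · intro y hy hys
        rcases Finset.mem_insert.1 hy with rfl | hy
        · rw [hidx]; exact hxE
        · exact absurd hy hys
    have hD' : InQD D ⟨insert x s, r.A, r.infinite⟩ := hr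
    apply main ⟨insert x s, r.A, r.infinite⟩ hD'
    · rw [QLE_iff hn]
      exact ⟨hW.mono hn hrq.2, hrq.2⟩
    · intro h
      simp only at h
      rw [← h] at hxs
      exact hxs (Finset.mem_insert_self _ _)
    · apply hopen _ r hD' hr _ hrI
      rw [QLE_iff hn]
      refine ⟨?_, fun i _ => subset_rfl⟩
      rw [hne]; exact hW
  · exact main r hr hrq hne hrI

theorem bad_all {n : ℕ} (hn : 0 < n) (w : Finset ℕ) (C : Set ℕ) (Bad : Finset ℕ → Prop)
    (hbad : Bad w)
    (hCY : ∀ i < n, sliceMod n C i ⊆ {x | Bad w → w.card % n = i → Bad (insert x w)})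
    (hCX : ∀ x ∈ C, ∀ i < n, ∀ y ∈ sliceMod n C i, x < y →
      y ∈ ⋂ t ∈ (Finset.range (x + 1)).powerset, {x | Bad t → t.card % n = i → Bad (insert x t)}) :
    ∀ k, ∀ t : Finset ℕ, t.card = k → WExt n t w C → Bad t := by
  intro k
  induction k with
  | zero =>
    intro t ht hW
    have h1 : t = ∅ := Finset.card_eq_zero.1 ht
    have h2 : w = ∅ := Finset.subset_empty.1 (h1 ▸ hW.1)
    rw [h1, ← h2]; exact hbad
  | succ k ih =>
    intro t ht hW
    by_cases htw : t = w
    · rw [htw]; exact hbad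
    obtain ⟨h1, h2, h3⟩ := hW
    have hne : t.Nonempty := Finset.card_pos.1 (by omega)
    set x := t.max' hne with hxdef
    have hxt : x ∈ t := Finset.max'_mem _ _
    have hmax : ∀ y ∈ t, y ≤ x := fun y hy => Finset.le_max' _ _ hy
    have hxw : x ∉ w := by
      intro hxw
      apply htw
      apply Finset.Subset.antisymm _ h1
      intro y hy
      by_contra hc
      have := h2 y hy hc x hxw
      have := hmax y hy
      omega
    have hmem : ∀ y, y ∈ t.erase x ↔ y ∈ t ∧ y < x := by
      intro y
      rw [Finset.mem_erase]
      constructor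
      · rintro ⟨ha, hb⟩
        exact ⟨hb, lt_of_le_of_ne (hmax y hb) ha⟩
      · rintro ⟨ha, hb⟩
        exact ⟨hb.ne, ha⟩
    have hidx : setIdx (↑t) x = (t.erase x).card := setIdx_card hmem
    have hend : ∀ z ∈ t, z ∉ t.erase x → ∀ y ∈ t.erase x, y < z := by
      intro z hz hzn y hy
      rw [hmem] at hzn hy
      have := hmax z hz
      have : ¬ z < x := fun h => hzn ⟨hz, h⟩
      omega
    have hW' : WExt n (t.erase x) w C := by
      refine ⟨?_, ?_, ?_⟩
      · intro y hy
        exact (hmem y).2 ⟨h1 hy, h2 x hxt hxw y hy⟩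
      · intro y hy
        exact h2 y ((hmem y).1 hy).1
      · intro y hy hyw
        rw [setIdx_eq (Finset.erase_subset x t) hend hy]
        exact h3 y ((hmem y).1 hy).1 hyw
    have hbt := ih (t.erase x) (by rw [Finset.card_erase_of_mem hxt, ht]; rfl) hW'
    have hxC := h3 x hxt hxw
    rw [hidx] at hxC
    have hins : insert x (t.erase x) = t := Finset.insert_erase hxt
    rw [← hins]
    by_cases htw' : t.erase x = w
    · rw [htw'] at hxC ⊢
      exact hCY _ (Nat.mod_lt _ hn) hxC hbad rfl
    · obtain ⟨z, hz, hzw⟩ : ∃ z ∈ t.erase x, z ∉ w := by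
        by_contra hc
        push Not at hc
        exact htw' (Finset.Subset.antisymm hc hW'.1)
      set m := (t.erase x).max' ⟨z, hz⟩ with hm
      have hmt : m ∈ t.erase x := Finset.max'_mem _ _
      have hmm : ∀ y ∈ t.erase x, y ≤ m := fun y hy => Finset.le_max' _ _ hy
      have hmw : m ∉ w := by
        intro hh
        have := hW'.2.1 z hz hzw m hh
        have := hmm z hz
        omega
      have hmC := (hW'.2.2 m hmt hmw).1
      have hX := hCX m hmC _ (Nat.mod_lt _ hn) x hxC ((hmem m).1 hmt).2
      simp only [Set.mem_iInter] at hX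
      refine hX (t.erase x) ?_ hbt rfl
      rw [Finset.mem_powerset]
      intro y hy
      rw [Finset.mem_range]
      have := hmm y hy
      omega

theorem good_some {n : ℕ} (hn : 0 < n) (D : Fin n → Ultrafilter ℕ)
    (hRam : ∀ i : Fin n, IsRamseyUF (D i)) (hRK : PairwiseNotRKEquiv D)
    (I0 I1 : Set (QCond n))
    (hopen0 : ∀ p q : QCond n, InQD D p → InQD D q → QLE n p q → q ∈ I0 → p ∈ I0)
    (hopen1 : ∀ p q : QCond n, InQD D p → InQD D q → QLE n p q → q ∈ I1 → p ∈ I1)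
    (hdisj : I0 ∩ I1 = ∅)
    (hdense : ∀ p : QCond n, InQD D p →
      ∃ q : QCond n, InQD D q ∧ QLE n q p ∧ q ∈ I0 ∪ I1) (w : Finset ℕ) :
    GoodW D I0 w ∨ GoodW D I1 w := by
  classical
  by_contra hbad
  obtain ⟨Bad, hBad⟩ : ∃ Bad : Finset ℕ → Prop, ∀ t, Bad t ↔ ¬ (GoodW D I0 t ∨ GoodW D I1 t) :=
    ⟨_, fun _ => Iff.rfl⟩
  rw [← hBad] at hbad
  have hstep : ∀ t, Bad t → {x | Bad (insert x t)} ∈ D ⟨t.card % n, Nat.mod_lt _ hn⟩ := by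
    intro t ht
    by_contra hc
    rw [← Ultrafilter.compl_mem_iff_notMem] at hc
    have hc' : {x | GoodW D I0 (insert x t)} ∪ {x | GoodW D I1 (insert x t)} ∈
        D ⟨t.card % n, Nat.mod_lt _ hn⟩ := by
      apply Filter.mem_of_superset hc
      intro x hx
      exact not_not.1 (fun h => hx ((hBad _).2 h))
    rcases Ultrafilter.union_mem_iff.1 hc' with h | h
    · exact (hBad t).1 ht (Or.inl (good_step hn D hRam hRK I0 hopen0 t h))
    · exact (hBad t).1 ht (Or.inr (good_step hn D hRam hRK I1 hopen1 t h))
  have hstep' : ∀ t (i : Fin n), {x | Bad t → t.card % n = i → Bad (insert x t)} ∈ D i := by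
    intro t i
    by_cases ht : Bad t
    · by_cases hi : t.card % n = i
      · have : i = ⟨t.card % n, Nat.mod_lt _ hn⟩ := Fin.ext hi.symm
        rw [this]
        exact Filter.mem_of_superset (hstep t ht) (fun x hx _ _ => hx)
      · exact Filter.mem_of_superset Filter.univ_mem (fun x _ _ h => absurd h hi)
    · exact Filter.mem_of_superset Filter.univ_mem (fun x _ h => absurd h ht)
  let Z : Finset ℕ → ℕ → Set ℕ := fun t i => {x | Bad t → t.card % n = i → Bad (insert x t)}
  have hX : ∀ m, ∀ i : Fin n, (⋂ t ∈ (Finset.range (m + 1)).powerset, Z t i) ∈ D i := by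
    intro m i
    rw [← Ultrafilter.mem_coe, Filter.biInter_finset_mem]
    exact fun t _ => hstep' t i
  obtain ⟨C, hCinf, hCD, hCY, hCX⟩ := diag hn D hRam hRK (Z w) (fun i => hstep' w i)
    (fun m i => ⋂ t ∈ (Finset.range (m + 1)).powerset, Z t i) hX
  have hall := bad_all hn w C Bad hbad hCY hCX
  obtain ⟨r, hr, hrq, hrI⟩ := hdense ⟨w, C, hCinf⟩ hCD
  have hrb : Bad r.w := hall _ r.w rfl ((QLE_iff hn _ _).1 hrq).1
  apply (hBad _).1 hrb
  rcases hrI with h | h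
  · right
    refine ⟨r, hr, rfl, fun r' hr' hle h' => ?_⟩
    have : r' ∈ I0 ∩ I1 := ⟨hopen0 _ _ hr' hr hle h, h'⟩
    rw [hdisj] at this
    exact this
  · left
    refine ⟨r, hr, rfl, fun r' hr' hle h' => ?_⟩
    have : r' ∈ I0 ∩ I1 := ⟨h', hopen1 _ _ hr' hr hle h⟩
    rw [hdisj] at this
    exact this

theorem good_merge {n : ℕ} (hn : 0 < n) (D : Fin n → Ultrafilter ℕ)
    (hRam : ∀ i : Fin n, IsRamseyUF (D i)) (hRK : PairwiseNotRKEquiv D)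
    (I : Set (QCond n)) (p : QCond n) (hp : InQD D p) (h : GoodW D I p.w) :
    ∃ q : QCond n, InQD D q ∧ q.w = p.w ∧ QLE n q p ∧
      (∀ r : QCond n, InQD D r → QLE n r q → r ∉ I) := by
  obtain ⟨q0, hq0, hw, hq⟩ := h
  obtain ⟨E, hEinf, hED, hEY, -⟩ := diag hn D hRam hRK
    (fun i => sliceMod n p.A i ∩ sliceMod n q0.A i)
    (fun i => Filter.inter_mem (hp i) (hq0 i)) (fun _ _ => Set.univ)
    (fun _ _ => Filter.univ_mem)
  refine ⟨⟨p.w, E, hEinf⟩, hED, rfl, ?_, ?_⟩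
  · rw [QLE_iff hn]
    exact ⟨WExt.refl _ _, fun i hi => (hEY i hi).trans Set.inter_subset_left⟩
  · intro r hr hle
    apply hq r hr
    rw [QLE_iff hn] at hle ⊢
    have hE2 : ∀ i < n, sliceMod n E i ⊆ sliceMod n q0.A i :=
      fun i hi => (hEY i hi).trans Set.inter_subset_right
    rw [hw]
    exact ⟨hle.1.mono hn hE2, fun i hi => (hle.2 i hi).trans (hE2 i hi)⟩

/-- Lemma 1.14 (pure decision for `Q(D 0, …, D (n-1))`, combinatorial form): if
`I0, I1 ⊆ Q(D 0, …, D (n-1))` are open, disjoint, and their union is dense, then every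
condition `p` has a pure extension `q ≤⁰ p` no extension of which lies in one of the
two sets. -/
theorem stmt5 (n : ℕ) (hn : 0 < n) (D : Fin n → Ultrafilter ℕ)
    (hRam : ∀ i : Fin n, IsRamseyUF (D i)) (hRK : PairwiseNotRKEquiv D)
    (I0 I1 : Set (QCond n))
    (hsub0 : ∀ p ∈ I0, InQD D p) (hsub1 : ∀ p ∈ I1, InQD D p)
    (hopen0 : ∀ p q : QCond n, InQD D p → InQD D q → QLE n p q → q ∈ I0 → p ∈ I0)
    (hopen1 : ∀ p q : QCond n, InQD D p → InQD D q → QLE n p q → q ∈ I1 → p ∈ I1)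
    (hdisj : I0 ∩ I1 = ∅)
    (hdense : ∀ p : QCond n, InQD D p →
      ∃ q : QCond n, InQD D q ∧ QLE n q p ∧ q ∈ I0 ∪ I1)
    (p : QCond n) (hp : InQD D p) :
    ∃ q : QCond n, InQD D q ∧ q.w = p.w ∧ QLE n q p ∧
      ((∀ r : QCond n, InQD D r → QLE n r q → r ∉ I1) ∨
       (∀ r : QCond n, InQD D r → QLE n r q → r ∉ I0)) := by
  rcases good_some hn D hRam hRK I0 I1 hopen0 hopen1 hdisj hdense p.w with h | h
  · obtain ⟨q, h1, h2, h3, h4⟩ := good_merge hn D hRam hRK I0 p hp h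
    exact ⟨q, h1, h2, h3, Or.inr h4⟩
  · obtain ⟨q, h1, h2, h3, h4⟩ := good_merge hn D hRam hRK I1 p hp h
    exact ⟨q, h1, h2, h3, Or.inl h4⟩
end

section
/- For every 0 < n < ω there exists a base tree for P_n of height 𝔥(n): a set T ⊆ P_n together with levels ⟨T_α : α < 𝔥(n)⟩ such that T is dense in P_n; for every x ∈ T the set pred_T(x) is well-ordered by the reverse of ≤; T_α is the nonempty set of all x ∈ T for which pred_T(x) has order type α, and T = ⋃_{α<𝔥(n)} T_α; every level T_α is a maximal antichain in P_n; and every element of T has 2^ℵ₀-many immediate successors in T. -/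
/-- `Pn n` is the poset of `n`-tuples of infinite subsets of ℕ, representing
`(P(ω)/fin)ⁿ`. -/
def Pn (n : ℕ) := {x : Fin n → Set ℕ // ∀ i : Fin n, (x i).Infinite}

/-- The order of `Pn n`: `x ≤ y` iff `x i ⊆* y i` (almost inclusion) for all `i`. -/
def PnLE {n : ℕ} (x y : Pn n) : Prop := ∀ i : Fin n, (x.1 i \ y.1 i).Finite

/-- Compatibility in `Pn n`: `x i ∩ y i` is infinite for every `i`. -/
def PnCompat {n : ℕ} (x y : Pn n) : Prop := ∀ i : Fin n, (x.1 i ∩ y.1 i).Infinite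

/-- `D ⊆ Pn n` is open: downward closed under `≤`. -/
def PnOpen {n : ℕ} (D : Set (Pn n)) : Prop :=
  ∀ x y : Pn n, PnLE x y → y ∈ D → x ∈ D

/-- `D ⊆ Pn n` is dense: every element has a `≤`-extension in `D`. -/
def PnDense {n : ℕ} (D : Set (Pn n)) : Prop := ∀ x : Pn n, ∃ y ∈ D, PnLE y x

/-- The distributivity number `𝔥(n)`: the least cardinality of a family of open dense
subsets of `Pn n` whose intersection is not dense. -/
noncomputable def hdist (n : ℕ) : Cardinal :=
  sInf {κ : Cardinal | ∃ F : Set (Set (Pn n)),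
    Cardinal.mk F = κ ∧ (∀ D ∈ F, PnOpen D ∧ PnDense D) ∧ ¬ PnDense (⋂₀ F)}

/-- The set of strict predecessors of `x` in `T`. -/
def predT {n : ℕ} (T : Set (Pn n)) (x : Pn n) : Set (Pn n) :=
  {y ∈ T | PnLE x y ∧ ¬ PnLE y x}

/-- The reverse of `≤` (as a strict relation) on the predecessors of `x` in `T`. -/
def predRel {n : ℕ} (T : Set (Pn n)) (x : Pn n) :
    predT T x → predT T x → Prop :=
  fun a b => PnLE b.1 a.1 ∧ ¬ PnLE a.1 b.1

/-- `T` with levels `L` is a base tree for `Pn n` of height `𝔥(n)`: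
`T` is dense; the predecessors of each node are well-ordered by the reverse of `≤`;
`L α` (for `α < 𝔥(n)`) is the set of nodes whose predecessors have order type `α`;
each level is nonempty, the levels cover `T`, each level is a maximal antichain in
`Pn n`, and every node has `2^ℵ₀`-many immediate successors in `T`. -/
structure IsBaseTree (n : ℕ) (T : Set (Pn n)) (L : Ordinal → Set (Pn n)) : Prop where
  dense : PnDense T
  wellOrdered : ∀ x (hx : x ∈ T), IsWellOrder (predT T x) (predRel T x)
  level_eq : ∀ α < (hdist n).ord, ∀ x : Pn n,
    x ∈ L α ↔ ∃ hx : x ∈ T, @Ordinal.type _ (predRel T x) (wellOrdered x hx) = α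
  level_nonempty : ∀ α < (hdist n).ord, (L α).Nonempty
  level_covers : ∀ x ∈ T, ∃ α < (hdist n).ord, x ∈ L α
  level_antichain : ∀ α < (hdist n).ord, ∀ x ∈ L α, ∀ y ∈ L α, x ≠ y → ¬ PnCompat x y
  level_maximal : ∀ α < (hdist n).ord, ∀ z : Pn n, ∃ x ∈ L α, PnCompat z x
  succ_card : ∀ y ∈ T,
    Cardinal.mk {x : Pn n // x ∈ T ∧ predT T x = predT T y ∪ {y}} = Cardinal.continuum

namespace BT

section abstract

variable {P : Type} [Preorder P]

def Cpt (x y : P) : Prop := ∃ z, z ≤ x ∧ z ≤ y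

def AC (S : Set P) : Prop := ∀ x ∈ S, ∀ y ∈ S, Cpt x y → x = y

def MX (S : Set P) : Prop := ∀ z, ∃ s ∈ S, Cpt z s

def Op (D : Set P) : Prop := ∀ x y, x ≤ y → y ∈ D → x ∈ D

def Dn (D : Set P) : Prop := ∀ x, ∃ y ∈ D, y ≤ x

theorem Cpt.symm {x y : P} (h : Cpt x y) : Cpt y x := by
  obtain ⟨z, a, b⟩ := h
  exact ⟨z, b, a⟩

theorem Cpt.mono {x y x' y' : P} (h : Cpt x y) (hx : x ≤ x') (hy : y ≤ y') : Cpt x' y' := by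
  obtain ⟨z, a, b⟩ := h
  exact ⟨z, a.trans hx, b.trans hy⟩

theorem Cpt.of_le {x y : P} (h : x ≤ y) : Cpt x y := ⟨x, le_rfl, h⟩

theorem exists_max (D A : Set P) (hD : Dn D) (hA : AC A) (hAD : A ⊆ D) :
    ∃ S, A ⊆ S ∧ S ⊆ D ∧ AC S ∧ MX S := by
  obtain ⟨S, hAS, hS⟩ := zorn_subset_nonempty {S : Set P | S ⊆ D ∧ AC S} (by
    intro c hc hch hne
    refine ⟨⋃₀ c, ⟨Set.sUnion_subset fun s hs => (hc hs).1, ?_⟩,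
      fun s hs => Set.subset_sUnion_of_mem hs⟩
    rintro x ⟨s, hs, hx⟩ y ⟨t, ht, hy⟩ hxy
    rcases hch.total hs ht with h | h
    · exact (hc ht).2 x (h hx) y hy hxy
    · exact (hc hs).2 x hx y (h hy) hxy) A ⟨hAD, hA⟩
  refine ⟨S, hAS, hS.prop.1, hS.prop.2, ?_⟩
  intro z
  by_contra hcon
  push Not at hcon
  obtain ⟨d, hd, hdz⟩ := hD z
  have hnot : ∀ s ∈ S, ¬ Cpt d s := fun s hs h => hcon s hs (h.mono hdz le_rfl)
  have hins : insert d S ∈ {S : Set P | S ⊆ D ∧ AC S} := by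
    refine ⟨Set.insert_subset hd hS.prop.1, ?_⟩
    rintro x (rfl | hx) y (rfl | hy) hxy
    · rfl
    · exact absurd hxy (hnot y hy)
    · exact absurd hxy.symm (hnot x hx)
    · exact hS.prop.2 x hx y hy hxy
  have hdS : d ∈ S := hS.le_of_ge hins (Set.subset_insert d S) (Set.mem_insert d S)
  exact hnot d hdS (Cpt.of_le le_rfl)

theorem exists_inj_choice {X Y : Type} (A : X → Set Y) (c : Cardinal.{0})
    (hX : Cardinal.mk X ≤ c) (hA : ∀ x, c ≤ Cardinal.mk (A x)) :
    ∃ f : X → Y, Function.Injective f ∧ ∀ x, f x ∈ A x := by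
  obtain ⟨r, hr, hrt⟩ := Cardinal.exists_ord_eq X
  have key : ∀ (x : X) (g : ∀ y, r y x → Y), ∃ a ∈ A x, ∀ y (h : r y x), g y h ≠ a := by
    intro x g
    by_contra hcon
    push Not at hcon
    have h1 : Cardinal.mk (A x) ≤ Cardinal.mk {y // r y x} := by
      have hsub : A x ⊆ Set.range (fun y : {y // r y x} => g y.1 y.2) := by
        intro a ha
        obtain ⟨y, h, e⟩ := hcon a ha
        exact ⟨⟨y, h⟩, e⟩
      exact (Cardinal.mk_le_mk_of_subset hsub).trans Cardinal.mk_range_le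
    have h2 : Cardinal.mk {y // r y x} < Cardinal.mk X := by
      rw [← Ordinal.card_typein, ← Cardinal.lt_ord, hrt]
      exact Ordinal.typein_lt_type r x
    exact absurd (h2.trans_le (hX.trans ((hA x).trans h1))) (lt_irrefl _)
  choose F hF1 hF2 using key
  let f : X → Y := hr.wf.fix F
  have hf : ∀ x, f x = F x (fun y _ => f y) := fun x => hr.wf.fix_eq F x
  refine ⟨f, ?_, fun x => by rw [hf]; exact hF1 _ _⟩
  have hlt : ∀ x y, r y x → f y ≠ f x := by
    intro x y h
    rw [hf x]
    exact hF2 x (fun y _ => f y) y h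
  intro x y hxy
  by_contra hne
  rcases trichotomous_of r x y with h | h | h
  · exact hlt _ _ h hxy
  · exact hne h
  · exact hlt _ _ h hxy.symm

abbrev C2 := ℕ → Bool

theorem mk_C2 : Cardinal.mk C2 = Cardinal.continuum := by simp [C2]

/-- structural hypotheses on the poset -/
structure Nice (P : Type) [Preorder P] : Prop where
  ne : Nonempty P
  sep : ∀ x t : P, ¬ x ≤ t → ∃ x' ≤ x, ¬ Cpt x' t
  card : Cardinal.mk P ≤ Cardinal.continuum
  ad : ∀ u : P, ∃ g : C2 → P, (∀ a, g a ≤ u) ∧ ∀ a b, Cpt (g a) (g b) → a = b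
  closed : ∀ s : ℕ → P, Antitone s → ∃ z, ∀ k, z ≤ s k
  homog : ∀ x : P, ∃ φ : P → P, Monotone φ ∧ (∀ y, φ y ≤ x) ∧
    ∀ y z, z ≤ φ y → ∃ y' ≤ y, φ y' ≤ z

theorem step (hP : Nice P) (D : Set P) (hO : Op D) (hD : Dn D) :
    ∃ M S : Set P, AC M ∧ MX M ∧ M ⊆ D ∧ AC S ∧ MX S ∧ S ⊆ D ∧ 
      (∀ m ∈ M, ∃ g : C2 → P, Function.Injective g ∧ ∀ a, g a ∈ S ∧ g a ≤ m) ∧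
      (∀ x, Cardinal.continuum ≤ Cardinal.mk {m // m ∈ M ∧ Cpt x m} → ∃ s ∈ S, s ≤ x) := by
  obtain ⟨M, -, hMD, hMA, hMX⟩ := exists_max D ∅ hD (fun x hx => hx.elim) (Set.empty_subset _)
  let X := {x : P // Cardinal.continuum ≤ Cardinal.mk {m // m ∈ M ∧ Cpt x m}}
  obtain ⟨f, hfi, hf⟩ := exists_inj_choice (X := X) (fun x => {m | m ∈ M ∧ Cpt x.1 m})
    Cardinal.continuum ((Cardinal.mk_subtype_le _).trans hP.card) (fun x => x.2)
  have hu : ∀ m : P, ∃ u ≤ m, ∀ x : X, f x = m → u ≤ x.1 := by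
    intro m
    by_cases h : ∃ x, f x = m
    · obtain ⟨x, rfl⟩ := h
      obtain ⟨z, hz1, hz2⟩ := (hf x).2
      refine ⟨z, hz2, fun x' hx' => ?_⟩
      rw [hfi hx']; exact hz1
    · exact ⟨m, le_rfl, fun x hx => (h ⟨x, hx⟩).elim⟩
  choose u hum hux using hu
  choose g hgu hga using hP.ad
  let A : Set P := {p | ∃ m ∈ M, ∃ a, p = g (u m) a}
  obtain ⟨S, hAS, hSD, hSA, hSX⟩ := exists_max D A hD (by
      rintro x ⟨m, hm, a, rfl⟩ y ⟨m', hm', b, rfl⟩ hxy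
      have : m = m' := hMA _ hm _ hm'
        (hxy.mono ((hgu _ _).trans (hum _)) ((hgu _ _).trans (hum _)))
      subst this
      rw [hga _ _ _ hxy])
    (by
      rintro x ⟨m, hm, a, rfl⟩
      exact hO _ _ ((hgu _ _).trans (hum _)) (hMD hm))
  refine ⟨M, S, hMA, hMX, hMD, hSA, hSX, hSD, ?_, ?_⟩
  · intro m hm
    refine ⟨g (u m), fun a b h => hga _ _ _ (Cpt.of_le h.le),
      fun a => ⟨hAS ⟨m, hm, a, rfl⟩, (hgu _ _).trans (hum _)⟩⟩
  · intro x hx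
    exact ⟨g (u (f ⟨x, hx⟩)) (fun _ => false), hAS ⟨_, (hf ⟨x, hx⟩).1, _, rfl⟩,
      (hgu _ _).trans (hux _ ⟨x, hx⟩ rfl)⟩

/-- `κ` behaves as the distributivity number. -/
structure Hn (P : Type) [Preorder P] (κ : Cardinal.{0}) (E : Ordinal.{0} → Set P) : Prop where
  dist : ∀ (ι : Type) (D : ι → Set P), Cardinal.mk ι < κ → (∀ i, Op (D i) ∧ Dn (D i)) →
    Dn (⋂ i, D i)
  op : ∀ α < κ.ord, Op (E α)
  dn : ∀ α < κ.ord, Dn (E α)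
  emp : ∀ x, ∃ α < κ.ord, x ∉ E α
  unc : Cardinal.aleph0 < κ

def Spec (E : Ordinal.{0} → Set P) (α : Ordinal.{0}) (prev : ∀ β, β < α → Set P)
    (S : Set P) : Prop :=
  AC S ∧ MX S ∧ S ⊆ E α ∧ ∀ β (h : β < α),
    (∀ s ∈ S, ∃ t ∈ prev β h, s ≤ t) ∧
    (∀ t ∈ prev β h, ∃ g : C2 → P, Function.Injective g ∧ ∀ a, g a ∈ S ∧ g a ≤ t) ∧
    (∀ x, Cardinal.continuum ≤ Cardinal.mk {t // t ∈ prev β h ∧ Cpt x t} → ∃ s ∈ S, s ≤ x)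

theorem dn_down (S : Set P) (h : MX S) : Dn {x | ∃ s ∈ S, x ≤ s} := by
  intro x
  obtain ⟨s, hs, z, hzx, hzs⟩ := h x
  exact ⟨z, ⟨s, hs, hzs⟩, hzx⟩

theorem op_down (S : Set P) : Op {x | ∃ s ∈ S, x ≤ s} := by
  rintro x y hxy ⟨s, hs, h⟩
  exact ⟨s, hs, hxy.trans h⟩

theorem spec_exists (hP : Nice P) {κ : Cardinal.{0}} {E : Ordinal.{0} → Set P}
    (hE : Hn P κ E) (α : Ordinal.{0}) (hα : α < κ.ord) (prev : ∀ β, β < α → Set P)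
    (hprev : ∀ β h, AC (prev β h) ∧ MX (prev β h)) : ∃ S, Spec E α prev S := by
  let D1 : α.ToType → Set P := fun i =>
    {x | ∃ s ∈ prev (Ordinal.ToType.toOrd i).1 (Ordinal.ToType.toOrd i).2, x ≤ s}
  have hD1 : Dn (⋂ i, D1 i) := by
    apply hE.dist
    · rw [Cardinal.mk_toType]; exact Cardinal.lt_ord.1 hα
    · exact fun i => ⟨op_down _, dn_down _ (hprev _ _).2⟩
  have hO1 : Op (⋂ i, D1 i) := by
    intro x y hxy hy
    rw [Set.mem_iInter] at hy ⊢
    exact fun i => op_down _ x y hxy (hy i)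
  let D := E α ∩ ⋂ i, D1 i
  have hO : Op D := fun x y hxy hy => ⟨hE.op α hα x y hxy hy.1, hO1 x y hxy hy.2⟩
  have hD : Dn D := by
    intro x
    obtain ⟨y, hy, hyx⟩ := hE.dn α hα x
    obtain ⟨z, hz, hzy⟩ := hD1 y
    exact ⟨z, ⟨hE.op α hα z y hzy hy, hz⟩, hzy.trans hyx⟩
  have hDp : ∀ x ∈ D, ∀ β (h : β < α), ∃ t ∈ prev β h, x ≤ t := by
    intro x hx β h
    have h1 := Set.mem_iInter.1 hx.2 (Ordinal.ToType.mk ⟨β, h⟩)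
    have h2 : ∀ o : Set.Iio α, o = ⟨β, h⟩ → (∃ s ∈ prev o.1 o.2, x ≤ s) →
        ∃ t ∈ prev β h, x ≤ t := by
      rintro o rfl h
      exact h
    exact h2 _ (OrderIso.symm_apply_apply _ _) h1
  obtain ⟨M, S, hMA, hMX, hMD, hSA, hSX, hSD, hg, hx⟩ := step hP D hO hD
  refine ⟨S, hSA, hSX, fun s hs => (hSD hs).1, fun β h => ⟨fun s hs => hDp s (hSD hs) β h, ?_, ?_⟩⟩
  · intro t ht
    obtain ⟨m, hm, hc⟩ := hMX t
    obtain ⟨t', ht', hmt'⟩ := hDp m (hMD hm) β h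
    have : t = t' := (hprev β h).1 _ ht _ ht' (hc.mono le_rfl hmt')
    subst this
    obtain ⟨g, hgi, hgg⟩ := hg m hm
    exact ⟨g, hgi, fun a => ⟨(hgg a).1, (hgg a).2.trans hmt'⟩⟩
  · intro x hxc
    apply hx
    refine hxc.trans ?_
    have : ∀ t : {t // t ∈ prev β h ∧ Cpt x t}, ∃ m : {m // m ∈ M ∧ Cpt x m}, m.1 ≤ t.1 := by
      rintro ⟨t, ht, z, hzx, hzt⟩
      obtain ⟨m, hm, hc⟩ := hMX z
      obtain ⟨t', ht', hmt'⟩ := hDp m (hMD hm) β h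
      have : t = t' := (hprev β h).1 _ ht _ ht' (hc.mono hzt hmt')
      subst this
      exact ⟨⟨m, hm, hc.mono hzx le_rfl⟩, hmt'⟩
    choose F hF using this
    refine Cardinal.mk_le_of_injective (f := F) ?_
    intro t t' e
    apply Subtype.ext
    refine (hprev β h).1 _ t.2.1 _ t'.2.1 ⟨(F t).1, hF t, ?_⟩
    rw [e]; exact hF t'

/-- The levels of the tree. -/
theorem levels_exist (hP : Nice P) {κ : Cardinal.{0}} {E : Ordinal.{0} → Set P}
    (hE : Hn P κ E) : ∃ T : Ordinal.{0} → Set P, ∀ α < κ.ord, Spec E α (fun β _ => T β) (T α) := by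
  classical
  let F : ∀ α : Ordinal.{0}, (∀ β, β < α → Set P) → Set P := fun α prev =>
    Classical.epsilon (Spec E α prev)
  let T : Ordinal.{0} → Set P := (wellFounded_lt (α := Ordinal.{0})).fix F
  have hT : ∀ α, T α = F α (fun β _ => T β) := fun α => WellFounded.fix_eq _ F α
  refine ⟨T, fun α => ?_⟩
  induction α using WellFoundedLT.induction with
  | ind α ih =>
    intro hα
    have := Classical.epsilon_spec (spec_exists hP hE α hα (fun β _ => T β)
      (fun β h => ⟨(ih β h (h.trans hα)).1, (ih β h (h.trans hα)).2.1⟩))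
    rw [hT α]
    exact this

def bl (f : C2) : ℕ → List Bool
  | 0 => []
  | k + 1 => f k :: bl f k

theorem bl_congr (f g : C2) (k : ℕ) (h : ∀ j < k, f j = g j) : bl f k = bl g k := by
  induction k with
  | zero => rfl
  | succ k ih => 
    rw [bl, bl, h k (Nat.lt_succ_self k), ih fun j hj => h j (hj.trans (Nat.lt_succ_self k))]

theorem bl_length (f : C2) (k : ℕ) : (bl f k).length = k := by
  induction k with
  | zero => rfl
  | succ k ih => simp [bl, ih]

theorem first_diff (f g : C2) (h : f ≠ g) : ∃ k, bl f k = bl g k ∧ f k ≠ g k := by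
  classical
  have h' : ∃ k, f k ≠ g k := Function.ne_iff.1 h
  refine ⟨Nat.find h', bl_congr _ _ _ fun j hj => ?_, Nat.find_spec h'⟩
  simpa using Nat.find_min h' hj

section tree

variable {κ : Cardinal.{0}} {E T : Ordinal.{0} → Set P}
  (hP : Nice P) (hE : Hn P κ E) (hT : ∀ α < κ.ord, Spec E α (fun β _ => T β) (T α))

include hT in
theorem le_of_cpt {α β : Ordinal.{0}} (hβ : β ≤ α) (hα : α < κ.ord) {s t : P} (hs : s ∈ T α)
    (ht : t ∈ T β) (hc : Cpt s t) : s ≤ t := by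
  rcases hβ.eq_or_lt with rfl | h
  · rw [(hT _ hα).1 s hs t ht hc]
  · obtain ⟨t', ht', hst'⟩ := ((hT α hα).2.2.2 β h).1 s hs
    rw [(hT β (h.trans hα)).1 t ht t' ht' (hc.symm.mono le_rfl hst')]
    exact hst'

include hT in
theorem lt_of_cpt {α β : Ordinal.{0}} (hβ : β < α) (hα : α < κ.ord) {s t : P} (hs : s ∈ T α)
    (ht : t ∈ T β) (hc : Cpt s t) : s < t := by
  refine lt_of_le_not_ge (le_of_cpt hT hβ.le hα hs ht hc) fun hts => ?_
  obtain ⟨g, hgi, hg⟩ := ((hT α hα).2.2.2 β hβ).2.1 t ht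
  have h : ∀ a, g a = s := fun a =>
    (hT α hα).1 _ (hg a).1 _ hs (Cpt.of_le ((hg a).2.trans hts))
  have := hgi ((h (fun _ => true)).trans (h (fun _ => false)).symm)
  simpa using congrFun this 0

include hP hE hT in
theorem two_cpt (x : P) : ∃ α < κ.ord, ∃ t ∈ T α, ∃ t' ∈ T α, t ≠ t' ∧ Cpt x t ∧ Cpt x t' := by
  by_contra hcon
  push Not at hcon
  obtain ⟨α, hα, hx⟩ := hE.emp x
  obtain ⟨t, ht, hxt⟩ := (hT α hα).2.1 x
  by_cases h : x ≤ t
  · exact hx (hE.op α hα x t h ((hT α hα).2.2.1 ht))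
  · obtain ⟨x', hx', hn⟩ := hP.sep x t h
    obtain ⟨t', ht', hxt'⟩ := (hT α hα).2.1 x'
    refine hcon α hα t ht t' ht' ?_ hxt (hxt'.mono hx' le_rfl)
    rintro rfl
    exact hn hxt'

include hP hE hT in
theorem sup_bound {ι : Type} [Countable ι] (a : ι → Ordinal.{0}) (ha : ∀ i, a i < κ.ord) :
    ∃ β < κ.ord, ∀ i, a i ≤ β := by
  by_contra hcon
  push Not at hcon
  have hd := hE.dist ι (fun i => {x | ∃ s ∈ T (a i), x ≤ s})
    ((Cardinal.mk_le_aleph0).trans_lt hE.unc)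
    (fun i => ⟨op_down _, dn_down _ (hT _ (ha i)).2.1⟩)
  obtain ⟨p⟩ := hP.ne
  obtain ⟨y, hy, -⟩ := hd p
  obtain ⟨β, hβ, hyβ⟩ := hE.emp y
  obtain ⟨i, hi⟩ := hcon β hβ
  obtain ⟨s, hs, hys⟩ := Set.mem_iInter.1 hy i
  obtain ⟨t, ht, hst⟩ := ((hT _ (ha i)).2.2.2 β hi).1 s hs
  exact hyβ (hE.op β hβ y t (hys.trans hst) ((hT β hβ).2.2.1 ht))

include hP hE hT in
theorem many_cpt (x : P) :
    ∃ β < κ.ord, Cardinal.continuum ≤ Cardinal.mk {t // t ∈ T β ∧ Cpt x t} := by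
  have h2 : ∀ x : P, ∃ α < κ.ord, ∃ (t y : Bool → P), (∀ b, t b ∈ T α) ∧ t false ≠ t true ∧
      (∀ b, y b ≤ x) ∧ ∀ b, y b ≤ t b := by
    intro x
    obtain ⟨α, hα, t, ht, t', ht', hne, ⟨z, hzx, hzt⟩, ⟨z', hzx', hzt'⟩⟩ := two_cpt hP hE hT x
    refine ⟨α, hα, fun b => if b then t' else t, fun b => if b then z' else z, ?_, ?_, ?_, ?_⟩
    · rintro (_ | _) <;> simpa
    · simpa
    · rintro (_ | _) <;> simpa
    · rintro (_ | _) <;> simpa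
  choose α hα t y htT htn hyx hyt using h2
  let node : List Bool → P := fun l => List.rec x (fun b _ p => y p b) l
  have hns : ∀ b l, node (b :: l) = y (node l) b := fun b l => rfl
  obtain ⟨β, hβ, hle⟩ := sup_bound hP hE hT (fun l => α (node l)) (fun l => hα _)
  have hz : ∀ f : C2, ∃ z, ∀ k, z ≤ node (bl f k) := by
    intro f
    apply hP.closed
    apply antitone_nat_of_succ_le
    intro k
    exact hyx _ _
  choose z hz using hz
  have hu : ∀ f : C2, ∃ s ∈ T β, Cpt (z f) s := fun f => (hT β hβ).2.1 (z f)
  choose u huT huz using hu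
  refine ⟨β, hβ, ?_⟩
  rw [← mk_C2]
  refine Cardinal.mk_le_of_injective
    (f := fun f => ⟨u f, huT f, (huz f).mono (hz f 0) le_rfl⟩) ?_
  intro f g hfg
  have hfg : u f = u g := congrArg Subtype.val hfg
  by_contra hne
  obtain ⟨k, hk, hd⟩ := first_diff f g hne
  have h1 : ∀ f : C2, u f ≤ t (node (bl f k)) (f k) := fun f =>
    le_of_cpt hT (hle _) hβ (huT f) (htT _ _)
      ((huz f).symm.mono le_rfl ((hz f (k+1)).trans (hyt _ _)))
  have ha := h1 f
  have hb := h1 g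
  rw [← hfg, ← hk] at hb
  have he := (hT _ (hα _)).1 _ (htT _ _) _ (htT _ _) ⟨u f, ha, hb⟩
  revert he
  generalize f k = c at *
  generalize g k = d at *
  cases c <;> cases d <;> simp_all
  exact fun h => htn _ h.symm

include hP hE hT in
theorem dense_T (x : P) : ∃ α < κ.ord, ∃ s ∈ T α, s ≤ x := by
  obtain ⟨β, hβ, hc⟩ := many_cpt hP hE hT x
  have hs : Order.succ β < κ.ord := (Cardinal.isSuccLimit_ord hE.unc.le).succ_lt hβ
  obtain ⟨s, h1, h2⟩ := ((hT _ hs).2.2.2 β (Order.lt_succ β)).2.2 x hc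
  exact ⟨_, hs, s, h1, h2⟩

end tree

/-- `Hn` from a least family. -/
theorem Hn_exists (hP : Nice P) (κ : Cardinal.{0})
    (hdist : ∀ F : Set (Set P), Cardinal.mk F < κ → (∀ D ∈ F, Op D ∧ Dn D) → Dn (⋂₀ F))
    (F : Set (Set P)) (hFc : Cardinal.mk F = κ) (hF : ∀ D ∈ F, Op D ∧ Dn D)
    (hFn : ¬ Dn (⋂₀ F)) : ∃ E, Hn P κ E := by
  unfold Dn at hFn
  push Not at hFn
  obtain ⟨x, hx⟩ := hFn
  obtain ⟨φ, hφm, hφx, hφ⟩ := hP.homog x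
  have hcard : Cardinal.mk κ.ord.ToType = Cardinal.mk F := by rw [hFc]; simp
  obtain ⟨e⟩ := Cardinal.eq.1 hcard
  let E : Ordinal.{0} → Set P := fun α => {y | ∃ h : α < κ.ord, 
    φ y ∈ (e (Ordinal.ToType.mk ⟨α, h⟩)).1}
  have hop : ∀ α < κ.ord, Op (E α) := by
    rintro α hα y z hyz ⟨h, hz⟩
    exact ⟨h, (hF _ (e _).2).1 _ _ (hφm hyz) hz⟩
  have hdn : ∀ α < κ.ord, Dn (E α) := by
    intro α hα y
    obtain ⟨z, hz, hzy⟩ := (hF _ (e (Ordinal.ToType.mk ⟨α, hα⟩)).2).2 (φ y)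
    obtain ⟨y', hy', hz'⟩ := hφ y z hzy
    exact ⟨y', ⟨hα, (hF _ (e _).2).1 _ _ hz' hz⟩, hy'⟩
  have hemp : ∀ y, ∃ α < κ.ord, y ∉ E α := by
    intro y
    by_contra hcon
    push Not at hcon
    refine hx (φ y) ?_ (hφx y)
    intro D hD
    obtain ⟨h, hh⟩ := hcon (Ordinal.ToType.toOrd (e.symm ⟨D, hD⟩)).1
      (Ordinal.ToType.toOrd (e.symm ⟨D, hD⟩)).2
    have h3 : Ordinal.ToType.mk ⟨(Ordinal.ToType.toOrd (e.symm ⟨D, hD⟩)).1, h⟩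
        = e.symm ⟨D, hD⟩ := OrderIso.apply_symm_apply _ _
    rw [h3, Equiv.apply_symm_apply] at hh
    exact hh
  have hunc : Cardinal.aleph0 < κ := by
    by_contra hcon
    rw [not_lt, ← hFc, Cardinal.mk_le_aleph0_iff] at hcon
    obtain ⟨D0, hD0⟩ : F.Nonempty := by
      by_contra hne
      rw [Set.not_nonempty_iff_eq_empty] at hne
      subst hne
      exact hx x (by simp) le_rfl
    have : Nonempty F := ⟨⟨D0, hD0⟩⟩
    obtain ⟨q, hq⟩ := exists_surjective_nat F
    have hd : ∀ k (p : P), ∃ p' ∈ (q k).1, p' ≤ p := fun k p => (hF _ (q k).2).2 p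
    choose d hdm hdle using hd
    let s : ℕ → P := fun k => Nat.rec x (fun k p => d k p) k
    obtain ⟨z, hz⟩ := hP.closed s (antitone_nat_of_succ_le fun k => hdle _ _)
    refine hx z ?_ (hz 0)
    intro D hD
    obtain ⟨k, hk⟩ := hq ⟨D, hD⟩
    have : s (k+1) ∈ (q k).1 := hdm _ _
    rw [hk] at this
    exact (hF D hD).1 _ _ (hz (k+1)) this
  refine ⟨E, ?_, hop, hdn, hemp, hunc⟩
  intro ι D hι hD
  have := hdist (Set.range D) (Cardinal.mk_range_le.trans_lt hι)
    (by rintro _ ⟨i, rfl⟩; exact hD i)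
  rwa [Set.sInter_range] at this

end abstract
end BT

namespace BT

instance instPre (n : ℕ) : Preorder (Pn n) where
  le := PnLE
  le_refl x i := by simp
  le_trans x y z hxy hyz i := by
    refine ((hxy i).union (hyz i)).subset ?_
    intro k hk
    by_cases h : k ∈ y.1 i
    · exact Or.inr ⟨h, hk.2⟩
    · exact Or.inl ⟨hk.1, h⟩

theorem le_def {n : ℕ} (x y : Pn n) : x ≤ y ↔ PnLE x y := Iff.rfl

theorem le_of_sub {n : ℕ} {x y : Pn n} (h : ∀ i, x.1 i ⊆ y.1 i) : x ≤ y := by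
  intro i
  rw [Set.sdiff_eq_empty.2 (h i)]
  exact Set.finite_empty

theorem inf_inter {A B : Set ℕ} (hA : A.Infinite) (h : (A \ B).Finite) : (A ∩ B).Infinite := by
  intro hf
  apply hA
  rw [← Set.inter_union_sdiff A B]
  exact hf.union h

theorem cpt_iff {n : ℕ} (x y : Pn n) : Cpt x y ↔ PnCompat x y := by
  constructor
  · rintro ⟨z, hx, hy⟩ i
    have h0 : z.1 i \ (x.1 i ∩ y.1 i) ⊆ z.1 i \ x.1 i ∪ z.1 i \ y.1 i := by
      intro k hk
      by_cases h : k ∈ x.1 i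
      · exact Or.inr ⟨hk.1, fun h' => hk.2 ⟨h, h'⟩⟩
      · exact Or.inl ⟨hk.1, h⟩
    have h1 := inf_inter (z.2 i) (((hx i).union (hy i)).subset h0)
    exact h1.mono Set.inter_subset_right
  · intro h
    exact ⟨⟨fun i => x.1 i ∩ y.1 i, h⟩, le_of_sub fun i => Set.inter_subset_left,
      le_of_sub fun i => Set.inter_subset_right⟩

noncomputable def code : List Bool → ℕ := Encodable.encode

theorem code_inj : Function.Injective code := Encodable.encode_injective

theorem bl_inj (f : C2) : Function.Injective (bl f) := by
  intro a b h
  rw [← bl_length f a, ← bl_length f b, h]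

/-- Almost disjoint family. -/
def adf (f : C2) : Set ℕ := Set.range fun k => code (bl f k)

theorem adf_inf (f : C2) : (adf f).Infinite :=
  Set.infinite_range_of_injective (code_inj.comp (bl_inj f))

theorem bl_agree (f g : C2) (k : ℕ) : bl f k = bl g k → ∀ j < k, f j = g j := by
  induction k with
  | zero => intro _ j hj; omega
  | succ k ih =>
    intro h j hj
    rw [bl, bl, List.cons.injEq] at h
    rcases Nat.lt_succ_iff_lt_or_eq.1 hj with h' | rfl
    · exact ih h.2 j h'
    · exact h.1

theorem adf_ad (f g : C2) (h : (adf f ∩ adf g).Infinite) : f = g := by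
  by_contra hne
  obtain ⟨k, -, hk⟩ := first_diff f g hne
  apply h
  refine ((Set.finite_Iic k).image fun j => code (bl f j)).subset ?_
  rintro _ ⟨⟨j, rfl⟩, ⟨j', hj'⟩⟩
  have h1 := code_inj hj'
  have h2 : j' = j := by rw [← bl_length g j', ← bl_length f j, h1]
  subst h2
  refine ⟨j', ?_, rfl⟩
  rw [Set.mem_Iic]
  by_contra hlt
  exact hk (bl_agree f g j' h1.symm k (not_le.1 hlt))

theorem exists_pseudo (s : ℕ → Set ℕ) (h0 : ∀ k, (s k).Infinite)
    (hs : ∀ j k, j ≤ k → (s k \ s j).Finite) : ∃ z : Set ℕ, z.Infinite ∧ ∀ k, (z \ s k).Finite := by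
  have h1 : ∀ k, (s k ∩ ⋂ j ∈ Set.Iic k, s j).Infinite := by
    intro k
    apply inf_inter (h0 k)
    refine ((Set.finite_Iic k).biUnion (t := fun j => s k \ s j) fun j hj => hs j k hj).subset ?_
    intro m hm
    simp only [Set.mem_sdiff, Set.mem_iInter, not_forall] at hm
    obtain ⟨hm, j, hj, hmj⟩ := hm
    exact Set.mem_biUnion hj ⟨hm, hmj⟩
  have h2 : ∀ k, ∃ᶠ m in Filter.atTop, ∀ j ≤ k, m ∈ s j := by
    intro k
    rw [Nat.frequently_atTop_iff_infinite]
    refine (h1 k).mono ?_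
    rintro m ⟨-, hm⟩ j hj
    exact Set.mem_iInter₂.1 hm j hj
  obtain ⟨φ, hφ, hφs⟩ := Filter.extraction_forall_of_frequently h2
  refine ⟨Set.range φ, Set.infinite_range_of_injective hφ.injective, fun k => ?_⟩
  refine ((Set.finite_Iio k).image φ).subset ?_
  rintro _ ⟨⟨m, rfl⟩, hm⟩
  refine ⟨m, ?_, rfl⟩
  rw [Set.mem_Iio]
  by_contra hlt
  exact hm (hφs m k (not_lt.1 hlt))

theorem exists_emb {n : ℕ} (x : Pn n) : ∃ e : Fin n → ℕ → ℕ, 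
    ∀ i, Function.Injective (e i) ∧ ∀ k, e i k ∈ x.1 i :=
  ⟨fun i k => (x.2 i).natEmbedding _ k, fun i => 
    ⟨fun a b h => ((x.2 i).natEmbedding _).injective (Subtype.ext h),
      fun k => ((x.2 i).natEmbedding _ k).2⟩⟩

theorem nice (n : ℕ) (hn : 0 < n) : Nice (Pn n) where
  ne := ⟨⟨fun _ => Set.univ, fun _ => Set.infinite_univ⟩⟩
  sep := by
    classical
    intro x t h
    rw [le_def, PnLE, not_forall] at h
    obtain ⟨i, hi⟩ := h
    refine ⟨⟨fun j => if j = i then x.1 j \ t.1 j else x.1 j, fun j => ?_⟩, ?_, ?_⟩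
    · dsimp only
      split_ifs with hj
      · subst hj; exact hi
      · exact x.2 j
    · apply le_of_sub
      intro j
      dsimp only
      split_ifs
      · exact Set.sdiff_subset
      · exact subset_rfl
    · intro hc
      have hc := (cpt_iff _ _).1 hc i
      apply hc
      simp
  card := by
    refine (Cardinal.mk_subtype_le _).trans ?_
    have : Cardinal.mk (Fin n → Set ℕ) ≤ Cardinal.mk (Set (Fin n × ℕ)) := by
      refine Cardinal.mk_le_of_injective (f := fun x => {p | p.2 ∈ x p.1}) ?_
      intro x y h
      ext i k
      exact Set.ext_iff.1 h (i, k)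
    refine this.trans ?_
    rw [Cardinal.mk_set, ← Cardinal.two_power_aleph0]
    exact Cardinal.power_le_power_left two_ne_zero Cardinal.mk_le_aleph0
  ad := by
    classical
    intro u
    obtain ⟨e, he⟩ := exists_emb u
    refine ⟨fun a => ⟨fun i => e i '' adf a, fun i => (adf_inf a).image (he i).1.injOn⟩, ?_, ?_⟩
    · intro a
      apply le_of_sub
      rintro i _ ⟨k, -, rfl⟩
      exact (he i).2 k
    · intro a b hab
      have h := (cpt_iff _ _).1 hab ⟨0, hn⟩
      dsimp only at h
      rw [← Set.image_inter (he _).1] at h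
      exact adf_ad a b (h.of_image _)
  closed := by
    intro s hs
    choose z hz hzs using fun i : Fin n => exists_pseudo (fun k => (s k).1 i) (fun k => (s k).2 i)
      (fun j k hjk => hs hjk i)
    exact ⟨⟨z, hz⟩, fun k i => hzs i k⟩
  homog := by
    intro x
    obtain ⟨e, he⟩ := exists_emb x
    refine ⟨fun y => ⟨fun i => e i '' y.1 i, fun i => (y.2 i).image (he i).1.injOn⟩, ?_, ?_, ?_⟩
    · intro y z hyz i
      dsimp only
      rw [← Set.image_sdiff (he i).1]
      exact (hyz i).image _
    · intro y
      apply le_of_sub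
      rintro i _ ⟨k, -, rfl⟩
      exact (he i).2 k
    · intro y z hzy
      have h1 : ∀ i, z.1 i ∩ e i '' y.1 i ⊆ e i '' (e i ⁻¹' z.1 i ∩ y.1 i) := by
        rintro i _ ⟨hz, k, hk, rfl⟩
        exact ⟨k, ⟨hz, hk⟩, rfl⟩
      refine ⟨⟨fun i => e i ⁻¹' z.1 i ∩ y.1 i, fun i => ?_⟩, ?_, ?_⟩
      · exact ((inf_inter (z.2 i) (hzy i)).mono (h1 i)).of_image _
      · exact le_of_sub fun i => Set.inter_subset_right
      · apply le_of_sub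
        rintro i _ ⟨k, hk, rfl⟩
        exact hk.1

theorem hn_exists (n : ℕ) (hn : 0 < n) : ∃ E, Hn (Pn n) (hdist n) E := by
  have hP := nice n hn
  have hne : {κ : Cardinal | ∃ F : Set (Set (Pn n)),
    Cardinal.mk F = κ ∧ (∀ D ∈ F, PnOpen D ∧ PnDense D) ∧ ¬ PnDense (⋂₀ F)}.Nonempty := by
    refine ⟨_, {D | PnOpen D ∧ PnDense D}, rfl, fun D hD => hD, ?_⟩
    intro hd
    obtain ⟨p⟩ := hP.ne
    obtain ⟨y, hy, -⟩ := hd p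
    have : y ∈ {x : Pn n | ¬ y ≤ x} := by
      apply hy
      refine ⟨fun a b hab hb hya => hb (le_trans hya hab), fun x => ?_⟩
      obtain ⟨g, hg, hgi⟩ := hP.ad x
      by_cases h : y ≤ g (fun _ => true)
      · refine ⟨g (fun _ => false), fun h' => ?_, hg _⟩
        have := congrFun (hgi _ _ ⟨y, h, h'⟩) 0
        simp at this
      · exact ⟨_, h, hg _⟩
    exact this le_rfl
  obtain ⟨F, hFc, hF, hFn⟩ := csInf_mem hne
  refine Hn_exists hP (hdist n) ?_ F hFc hF hFn
  intro F hF hFD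
  by_contra hcon
  exact notMem_of_lt_csInf' hF ⟨F, rfl, hFD, hcon⟩

theorem type_eq_of_rank {A : Type} (r : A → A → Prop) (hw : IsWellOrder A r) (α : Ordinal.{0})
    (ρ : A → Ordinal.{0}) (hρ : ∀ a b, r a b ↔ ρ a < ρ b) (hlt : ∀ a, ρ a < α)
    (hsurj : ∀ β < α, ∃ a, ρ a = β) : Ordinal.type r = α := by
  have hinj : Function.Injective ρ := by
    intro a b h
    rcases trichotomous_of r a b with h' | h' | h'
    · exact absurd ((hρ _ _).1 h') (by rw [h]; exact lt_irrefl _)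
    · exact h'
    · exact absurd ((hρ _ _).1 h') (by rw [h]; exact lt_irrefl _)
  let e : A ≃ α.ToType := Equiv.ofBijective (fun a => Ordinal.ToType.mk ⟨ρ a, hlt a⟩) (by
    constructor
    · intro a b h
      have h := Ordinal.ToType.mk.injective h
      exact hinj (congrArg Subtype.val h)
    · intro i
      obtain ⟨a, ha⟩ := hsurj (Ordinal.ToType.toOrd i).1 (Ordinal.ToType.toOrd i).2
      refine ⟨a, ?_⟩
      have : (⟨ρ a, hlt a⟩ : Set.Iio α) = Ordinal.ToType.toOrd i := Subtype.ext ha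
      dsimp only
      rw [this]
      exact OrderIso.apply_symm_apply _ _)
  have : Ordinal.type r = Ordinal.type (α := α.ToType) (· < ·) := by
    rw [Ordinal.type_eq]
    refine ⟨⟨e, ?_⟩⟩
    intro a b
    rw [hρ]
    exact OrderIso.lt_iff_lt (Ordinal.ToType.mk (o := α)) (x := ⟨ρ a, hlt a⟩) (y := ⟨ρ b, hlt b⟩)
  rw [this, Ordinal.type_toType]

end BT

/-- For every `0 < n < ω` there exists a base tree for `Pn n` of height `𝔥(n)`. -/
theorem stmt8 (n : ℕ) (hn : 0 < n) :
    ∃ (T : Set (Pn n)) (L : Ordinal → Set (Pn n)), IsBaseTree n T L := by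
  open BT in
  classical
  have hP := nice n hn
  obtain ⟨E, hE⟩ := hn_exists n hn
  obtain ⟨T, hT⟩ := levels_exist hP hE
  let U : Set (Pn n) := {x | ∃ α < (hdist n).ord, x ∈ T α}
  have hrank : ∀ x : Pn n, ∃ α : Ordinal.{0}, x ∈ U → α < (hdist n).ord ∧ x ∈ T α := by
    intro x
    by_cases h : x ∈ U
    · obtain ⟨α, h1, h2⟩ := h
      exact ⟨α, fun _ => ⟨h1, h2⟩⟩
    · exact ⟨0, fun h' => absurd h' h⟩
  choose ρ hρ using hrank
  have hlt : ∀ {α β : Ordinal.{0}} {x y : Pn n}, α < (hdist n).ord → β < (hdist n).ord →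
      x ∈ T α → y ∈ T β → Cpt x y → (x < y ↔ β < α) := by
    intro α β x y hα hβ hx hy hc
    rcases lt_trichotomy β α with h | h | h
    · exact iff_of_true (lt_of_cpt hT h hα hx hy hc) h
    · subst h
      rw [(hT _ hα).1 x hx y hy hc]
      exact iff_of_false (lt_irrefl _) (lt_irrefl _)
    · exact iff_of_false (lt_of_cpt hT h hβ hy hx hc.symm).not_gt h.not_gt
  have hρu : ∀ {α : Ordinal.{0}} {x : Pn n}, α < (hdist n).ord → x ∈ T α → ρ x = α := by
    intro α x hα hx
    have h := hρ x ⟨α, hα, hx⟩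
    have hc : Cpt x x := Cpt.of_le le_rfl
    rcases lt_trichotomy (ρ x) α with h' | h' | h'
    · exact absurd ((hlt hα h.1 hx h.2 hc).2 h') (lt_irrefl _)
    · exact h'
    · exact absurd ((hlt h.1 hα h.2 hx hc).2 h') (lt_irrefl _)
  have hpred : ∀ {x y : Pn n}, y ∈ predT U x ↔ y ∈ U ∧ x < y := by
    intro x y
    rfl
  have hrel : ∀ (x : Pn n) (a b : predT U x), predRel U x a b ↔ ρ a.1 < ρ b.1 := by
    intro x a b
    have ha := hpred.1 a.2
    have hb := hpred.1 b.2
    exact hlt (hρ _ hb.1).1 (hρ _ ha.1).1 (hρ _ hb.1).2 (hρ _ ha.1).2 ⟨x, hb.2.le, ha.2.le⟩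
  have huniq : ∀ {a b x : Pn n}, a ∈ U → b ∈ U → x ≤ a → x ≤ b → ρ a = ρ b → a = b := by
    intro a b x ha hb hxa hxb h
    have h1 := hρ a ha
    have h2 := hρ b hb
    rw [← h] at h2
    exact (hT _ h1.1).1 _ h1.2 _ h2.2 ⟨x, hxa, hxb⟩
  have hwo : ∀ x ∈ U, IsWellOrder (predT U x) (predRel U x) := by
    intro x hx
    let e : predRel U x ↪r ((· < ·) : Ordinal.{0} → Ordinal.{0} → Prop) :=
      ⟨⟨fun a => ρ a.1, fun a b h => Subtype.ext
        (huniq (hpred.1 a.2).1 (hpred.1 b.2).1 (hpred.1 a.2).2.le (hpred.1 b.2).2.le h)⟩,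
        fun {a b} => (hrel x a b).symm⟩
    exact e.isWellOrder
  have hpl : ∀ {α : Ordinal.{0}} {x : Pn n}, α < (hdist n).ord → x ∈ T α → ∀ y,
      y ∈ predT U x ↔ ∃ β < α, y ∈ T β ∧ x ≤ y := by
    intro α x hα hx y
    rw [hpred]
    constructor
    · rintro ⟨hy, hxy⟩
      have h := hρ y hy
      exact ⟨ρ y, (hlt hα h.1 hx h.2 (Cpt.of_le hxy.le)).1 hxy, h.2, hxy.le⟩
    · rintro ⟨β, hβ, hy, hxy⟩
      exact ⟨⟨β, hβ.trans hα, hy⟩, (hlt hα (hβ.trans hα) hx hy (Cpt.of_le hxy)).2 hβ⟩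
  have htype : ∀ {α : Ordinal.{0}} {x : Pn n} (hα : α < (hdist n).ord) (hx : x ∈ T α)
      (hw : IsWellOrder (predT U x) (predRel U x)), @Ordinal.type _ (predRel U x) hw = α := by
    intro α x hα hx hw
    refine type_eq_of_rank _ hw α (fun a => ρ a.1) (hrel x) ?_ ?_
    · intro a
      obtain ⟨β, hβ, hy, -⟩ := (hpl hα hx a.1).1 a.2
      rw [hρu (hβ.trans hα) hy]
      exact hβ
    · intro β hβ
      obtain ⟨t, ht, hxt⟩ := ((hT α hα).2.2.2 β hβ).1 x hx
      exact ⟨⟨t, (hpl hα hx t).2 ⟨β, hβ, ht, hxt⟩⟩, hρu (hβ.trans hα) ht⟩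
  refine ⟨U, T, ?_, hwo, ?_, ?_, ?_, ?_, ?_, ?_⟩
  · intro x
    obtain ⟨α, hα, s, hs, hsx⟩ := dense_T hP hE hT x
    exact ⟨s, ⟨α, hα, hs⟩, hsx⟩
  · intro α hα x
    constructor
    · intro hx
      exact ⟨⟨α, hα, hx⟩, htype hα hx _⟩
    · rintro ⟨⟨β, hβ, hx⟩, h⟩
      rw [htype hβ hx] at h
      rwa [← h]
  · intro α hα
    obtain ⟨p⟩ := hP.ne
    obtain ⟨s, hs, -⟩ := (hT α hα).2.1 p
    exact ⟨s, hs⟩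
  · exact fun x hx => hx
  · intro α hα x hx y hy hne hc
    exact hne ((hT α hα).1 x hx y hy ((cpt_iff x y).2 hc))
  · intro α hα z
    obtain ⟨s, hs, hc⟩ := (hT α hα).2.1 z
    exact ⟨s, hs, (cpt_iff _ _).1 hc⟩
  · rintro y ⟨α, hα, hy⟩
    apply le_antisymm ((Cardinal.mk_subtype_le _).trans hP.card)
    have hs : Order.succ α < (hdist n).ord := (Cardinal.isSuccLimit_ord hE.unc.le).succ_lt hα
    obtain ⟨g, hgi, hg⟩ := ((hT _ hs).2.2.2 α (Order.lt_succ α)).2.1 y hy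
    rw [← mk_C2]
    refine Cardinal.mk_le_of_injective (f := fun a => ⟨g a, ⟨_, hs, (hg a).1⟩, ?_⟩) ?_
    · ext z
      rw [hpl hs (hg a).1, Set.mem_union, hpl hα hy, Set.mem_singleton_iff]
      constructor
      · rintro ⟨β, hβ, hz, hgz⟩
        rcases (Order.lt_succ_iff.1 hβ).lt_or_eq with h | rfl
        · exact Or.inl ⟨β, h, hz, le_of_cpt hT h.le hα hy hz ⟨_, (hg a).2, hgz⟩⟩
        · exact Or.inr ((hT _ hα).1 _ hz _ hy ⟨_, hgz, (hg a).2⟩)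
      · rintro (⟨β, hβ, hz, hyz⟩ | rfl)
        · exact ⟨β, hβ.trans (Order.lt_succ α), hz, (hg a).2.trans hyz⟩
        · exact ⟨α, Order.lt_succ α, hy, (hg a).2⟩
    · intro a b h
      exact hgi (congrArg Subtype.val h)
end
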